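/- arXiv:math/0605767 — 12 statements merged into one kernel-verified Lean document; each statement's English description precedes it below -/
import Mathlib

section
/- Let x be a nonzero vector in ℝⁿ and let C be an n×n real symmetric positive definite matrix with spectral condition number κ(C). Then sin ∠(x, Cx) ≤ (κ(C) − 1)/(κ(C) + 1). (In particular Cx ≠ 0, ⟨x, Cx⟩ > 0, and the angle is acute.) -/
open Matrix

/-- The Euclidean norm of a vector in `ℝⁿ`. -/
noncomputable def vnorm {n : ℕ} (x : Fin n → ℝ) : ℝ := Real.sqrt (x ⬝ᵥ x)

/-- The angle `∠(x,y) = arccos(⟨x,y⟩/(‖x‖‖y‖)) ∈ [0,π]` between vectors in `ℝⁿ`. -/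
noncomputable def vangle {n : ℕ} (x y : Fin n → ℝ) : ℝ :=
  Real.arccos ((x ⬝ᵥ y) / (vnorm x * vnorm y))

/-- The spectral condition number `κ(C) = λmax(C)/λmin(C)` of a symmetric matrix. -/
noncomputable def condNum {n : ℕ} {C : Matrix (Fin n) (Fin n) ℝ} (hC : C.IsHermitian) : ℝ :=
  (⨆ i, hC.eigenvalues i) / (⨅ i, hC.eigenvalues i)

lemma key_ineq {n : ℕ} (x : Fin n → ℝ) (C : Matrix (Fin n) (Fin n) ℝ) (hC : C.IsHermitian)
    (m M : ℝ) (hm : ∀ i, m ≤ hC.eigenvalues i) (hM : ∀ i, hC.eigenvalues i ≤ M) :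
    (C *ᵥ x) ⬝ᵥ (C *ᵥ x) + m * M * (x ⬝ᵥ x) ≤ (M + m) * (x ⬝ᵥ (C *ᵥ x)) := by
  have hdot : ∀ u v : Fin n → ℝ, inner ℝ (WithLp.toLp 2 u) (WithLp.toLp 2 v) = u ⬝ᵥ v := by
    intro u v
    rw [EuclideanSpace.inner_toLp_toLp, star_trivial, dotProduct_comm]
  have hb : ∀ i, ∀ v : Fin n → ℝ, inner ℝ (hC.eigenvectorBasis i) (WithLp.toLp 2 v)
      = (hC.eigenvectorBasis i).ofLp ⬝ᵥ v := by
    intro i v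
    exact hdot (hC.eigenvectorBasis i).ofLp v
  have hCb : ∀ i, (hC.eigenvectorBasis i).ofLp ⬝ᵥ (C *ᵥ x)
      = hC.eigenvalues i * ((hC.eigenvectorBasis i).ofLp ⬝ᵥ x) := by
    intro i
    have hT : Cᵀ = C := by simpa [Matrix.IsHermitian, conjTranspose_eq_transpose_of_trivial] using hC
    rw [dotProduct_mulVec, ← mulVec_transpose, hT, hC.mulVec_eigenvectorBasis, smul_dotProduct,
      smul_eq_mul]
  have h := hC.eigenvectorBasis.sum_inner_mul_inner (WithLp.toLp 2 (C *ᵥ x - m • x))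
    (WithLp.toLp 2 (M • x - C *ᵥ x))
  have h0 : 0 ≤ (C *ᵥ x - m • x) ⬝ᵥ (M • x - C *ᵥ x) := by
    rw [← hdot, ← h]
    refine Finset.sum_nonneg fun i _ => ?_
    rw [real_inner_comm, hb, hb]
    simp only [dotProduct_sub, dotProduct_smul, hCb, smul_eq_mul]
    have h1 := mul_nonneg (mul_nonneg (sub_nonneg.2 (hm i)) (sub_nonneg.2 (hM i)))
      (sq_nonneg ((hC.eigenvectorBasis i).ofLp ⬝ᵥ x))
    nlinarith [h1]
  simp only [dotProduct_sub, sub_dotProduct, dotProduct_smul, smul_dotProduct, smul_eq_mul] at h0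
  rw [dotProduct_comm (C *ᵥ x) x] at h0
  nlinarith [h0]

/-- If `x ≠ 0` and `C` is a real symmetric positive definite matrix with
spectral condition number `κ(C)`, then `Cx ≠ 0`, `⟨x, Cx⟩ > 0`, the angle `∠(x, Cx)` is acute,
and `sin ∠(x, Cx) ≤ (κ(C) − 1)/(κ(C) + 1)`. -/
theorem sin_angle_le_of_posDef {n : ℕ} (x : Fin n → ℝ) (hx : x ≠ 0)
    (C : Matrix (Fin n) (Fin n) ℝ) (hC : C.PosDef) :
    C *ᵥ x ≠ 0 ∧ 0 < x ⬝ᵥ (C *ᵥ x) ∧ vangle x (C *ᵥ x) < Real.pi / 2 ∧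
      Real.sin (vangle x (C *ᵥ x)) ≤
        (condNum hC.isHermitian - 1) / (condNum hC.isHermitian + 1) := by
  have ht : 0 < x ⬝ᵥ (C *ᵥ x) := by
    have := hC.dotProduct_mulVec_pos hx
    simpa using this
  have hne : C *ᵥ x ≠ 0 := by
    intro h
    simp [h] at ht
  have pos : ∀ v : Fin n → ℝ, v ≠ 0 → 0 < v ⬝ᵥ v := by
    intro v hv
    have h1 : 0 ≤ v ⬝ᵥ v := Finset.sum_nonneg fun i _ => mul_self_nonneg _
    exact lt_of_le_of_ne h1 fun h => hv (dotProduct_self_eq_zero.1 h.symm)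
  have hA := pos x hx
  have hB := pos _ hne
  have hn : Nonempty (Fin n) := by
    by_contra h
    rw [not_nonempty_iff] at h
    exact hx (Subsingleton.elim _ _)
  have hfin := Set.finite_range hC.isHermitian.eigenvalues
  obtain ⟨j, hj⟩ := exists_eq_ciInf_of_finite (f := hC.isHermitian.eigenvalues)
  have hm : ∀ i, (⨅ i, hC.isHermitian.eigenvalues i) ≤ hC.isHermitian.eigenvalues i :=
    fun i => ciInf_le hfin.bddBelow i
  have hM : ∀ i, hC.isHermitian.eigenvalues i ≤ (⨆ i, hC.isHermitian.eigenvalues i) :=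
    fun i => le_ciSup hfin.bddAbove i
  have hk := key_ineq x C hC.isHermitian _ _ hm hM
  have hmpos : 0 < (⨅ i, hC.isHermitian.eigenvalues i) := hj ▸ hC.eigenvalues_pos j
  have hmM := (hm j).trans (hM j)
  refine ⟨hne, ht, ?_, ?_⟩
  · rw [vangle, Real.arccos_lt_pi_div_two]
    exact div_pos ht (mul_pos (Real.sqrt_pos.2 hA) (Real.sqrt_pos.2 hB))
  · rw [vangle, Real.sin_arccos, condNum]
    generalize (⨅ i, hC.isHermitian.eigenvalues i) = m at *
    generalize (⨆ i, hC.isHermitian.eigenvalues i) = M at *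
    rw [div_pow, mul_pow, vnorm, vnorm, Real.sq_sqrt hA.le, Real.sq_sqrt hB.le]
    generalize x ⬝ᵥ (C *ᵥ x) = t at *
    generalize (C *ᵥ x) ⬝ᵥ (C *ᵥ x) = B at *
    generalize x ⬝ᵥ x = A at *
    have hMp : 0 < M := hmpos.trans_le hmM
    have e : (M / m - 1) / (M / m + 1) = (M - m) / (M + m) := by
      field_simp
    rw [e, Real.sqrt_le_iff]
    refine ⟨div_nonneg (by linarith) (by linarith), ?_⟩
    have h2 : 4 * (m * M) / (M + m) ^ 2 ≤ t ^ 2 / (A * B) := by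
      rw [div_le_div_iff₀ (by positivity) (by positivity)]
      have h3 : (B + m * M * A) ^ 2 ≤ ((M + m) * t) ^ 2 :=
        pow_le_pow_left₀ (by positivity) hk 2
      nlinarith [sq_nonneg (B - m * M * A)]
    have h4 : ((M - m) / (M + m)) ^ 2 = 1 - 4 * (m * M) / (M + m) ^ 2 := by
      field_simp
      ring
    rw [h4]
    linarith
end

section
/- Let x and y be nonzero vectors in ℝⁿ such that ∠(x,y) < π/2, and set α = ∠(x,y). Then there exists an n×n real symmetric positive definite matrix C such that Cx = y and (κ(C) − 1)/(κ(C) + 1) = sin α, i.e., κ(C) = (1 + sin α)/(1 − sin α). -/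
open Matrix

lemma aux_C {n : ℕ} (v p : Fin n → ℝ) (a b : ℝ) (ha : 0 < a) (hab : a ≤ b) (hv : v ≠ 0) (hp : p ≠ 0)
    (hvp : (b - a) * (v ⬝ᵥ p) = 0) :
    ∃ (C : Matrix (Fin n) (Fin n) ℝ) (hC : C.PosDef), C *ᵥ v = a • v ∧ C *ᵥ p = b • p ∧
      condNum hC.isHermitian = b / a := by
  have hvv : v ⬝ᵥ v ≠ 0 := fun h => hv (dotProduct_self_eq_zero.1 h)
  let C : Matrix (Fin n) (Fin n) ℝ :=
    b • (1 : Matrix (Fin n) (Fin n) ℝ) - ((b - a) / (v ⬝ᵥ v)) • vecMulVec v v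
  have hCu : ∀ u, C *ᵥ u = b • u - ((b - a) / (v ⬝ᵥ v) * (v ⬝ᵥ u)) • v := by
    intro u
    simp only [C, sub_mulVec, smul_mulVec, one_mulVec, vecMulVec_mulVec]
    ext i
    simp
    ring
  have hH : C.IsHermitian := by
    ext i j
    simp [C, vecMulVec_apply, Matrix.one_apply, eq_comm, mul_comm]
  have hCv : C *ᵥ v = a • v := by
    rw [hCu, div_mul_cancel₀ _ hvv, ← sub_smul]; congr 1; ring
  have hCp : C *ᵥ p = b • p := by
    rw [hCu, div_mul_eq_mul_div, hvp]; simp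
  have hspec : ∀ (l : ℝ) (u : Fin n → ℝ), u ≠ 0 → C *ᵥ u = l • u → l = a ∨ l = b := by
    intro l u hu h
    rw [hCu] at h
    by_cases h0 : v ⬝ᵥ u = 0
    · right
      rw [h0] at h
      simp only [mul_zero, zero_smul, sub_zero] at h
      exact (smul_left_injective ℝ hu h).symm
    · left
      have h2 := congrArg (fun z => v ⬝ᵥ z) h
      simp only [dotProduct_sub, dotProduct_smul, smul_eq_mul] at h2
      have h3 : (b - a) / (v ⬝ᵥ v) * (v ⬝ᵥ u) * (v ⬝ᵥ v) = (b - a) * (v ⬝ᵥ u) := by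
        field_simp
      rw [h3] at h2
      apply mul_right_cancel₀ h0
      linarith
  have hattain : ∀ (l : ℝ) (u : Fin n → ℝ), u ≠ 0 → C *ᵥ u = l • u → ∃ i, hH.eigenvalues i = l := by
    intro l u hu h
    have : l ∈ spectrum ℝ C := by
      rw [← Matrix.spectrum_toLin']
      apply Module.End.HasEigenvalue.mem_spectrum
      apply Module.End.hasEigenvalue_of_hasEigenvector (x := u)
      rw [Module.End.hasEigenvector_iff, Module.End.mem_eigenspace_iff]
      exact ⟨by simpa using h, hu⟩
    rw [hH.spectrum_real_eq_range_eigenvalues] at this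
    exact this
  have hev : ∀ i, hH.eigenvalues i = a ∨ hH.eigenvalues i = b := by
    intro i
    refine hspec _ _ ?_ (hH.mulVec_eigenvectorBasis i)
    intro h
    have := hH.eigenvectorBasis.orthonormal.ne_zero i
    exact this (by ext j; exact congrFun h j)
  have hpd : C.PosDef := by
    rw [hH.posDef_iff_eigenvalues_pos]
    intro i
    rcases hev i with h | h <;> rw [h] <;> linarith
  refine ⟨C, hpd, hCv, hCp, ?_⟩
  obtain ⟨i, hi⟩ := hattain a v hv hCv
  obtain ⟨j, hj⟩ := hattain b p hp hCp
  have : Nonempty (Fin n) := ⟨i⟩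
  have h1 : (⨆ i, hH.eigenvalues i) = b := by
    apply le_antisymm
    · apply ciSup_le
      intro k; rcases hev k with h | h <;> rw [h]; exact hab
    · rw [← hj]; exact le_ciSup (Set.finite_range _).bddAbove j
  have h2 : (⨅ i, hH.eigenvalues i) = a := by
    apply le_antisymm
    · conv_rhs => rw [← hi]
      exact ciInf_le (Set.finite_range _).bddBelow i
    · apply le_ciInf
      intro k; rcases hev k with h | h <;> rw [h]; exact hab
  unfold condNum
  rw [h1, h2]

theorem exists_posDef_of_acute_angle {n : ℕ} (x y : Fin n → ℝ) (hx : x ≠ 0) (hy : y ≠ 0)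
    (hangle : vangle x y < Real.pi / 2) :
    ∃ (C : Matrix (Fin n) (Fin n) ℝ) (hC : C.PosDef),
      C *ᵥ x = y ∧
      (condNum hC.isHermitian - 1) / (condNum hC.isHermitian + 1) = Real.sin (vangle x y) ∧
      condNum hC.isHermitian =
        (1 + Real.sin (vangle x y)) / (1 - Real.sin (vangle x y)) := by
  have hxx : 0 < x ⬝ᵥ x := lt_of_le_of_ne (Finset.sum_nonneg fun i _ => mul_self_nonneg _)
    fun h => hx (dotProduct_self_eq_zero.1 h.symm)
  have hyy : 0 < y ⬝ᵥ y := lt_of_le_of_ne (Finset.sum_nonneg fun i _ => mul_self_nonneg _)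
    fun h => hy (dotProduct_self_eq_zero.1 h.symm)
  have hnx : 0 < vnorm x := Real.sqrt_pos.2 hxx
  have hny : 0 < vnorm y := Real.sqrt_pos.2 hyy
  have hc : 0 < (x ⬝ᵥ y) / (vnorm x * vnorm y) := Real.arccos_lt_pi_div_two.1 hangle
  have hk : 0 < x ⬝ᵥ y := by
    have := mul_pos hc (mul_pos hnx hny)
    rwa [div_mul_cancel₀ _ (mul_pos hnx hny).ne'] at this
  have hc2 : ((x ⬝ᵥ y) / (vnorm x * vnorm y)) ^ 2 = (x ⬝ᵥ y) ^ 2 / ((x ⬝ᵥ x) * (y ⬝ᵥ y)) := by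
    rw [div_pow, mul_pow, vnorm, vnorm, Real.sq_sqrt hxx.le, Real.sq_sqrt hyy.le]
  have hs : Real.sin (vangle x y) = Real.sqrt (1 - (x ⬝ᵥ y) ^ 2 / ((x ⬝ᵥ x) * (y ⬝ᵥ y))) := by
    rw [vangle, Real.sin_arccos, hc2]
  rw [hs]
  set k := x ⬝ᵥ y with hkdef
  set s := Real.sqrt (1 - k ^ 2 / ((x ⬝ᵥ x) * (y ⬝ᵥ y))) with hsdef
  have hs0 : 0 ≤ s := Real.sqrt_nonneg _
  let w : Fin n → ℝ := (k / (y ⬝ᵥ y)) • y - x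
  have hyx : y ⬝ᵥ x = k := dotProduct_comm _ _
  have hww : w ⬝ᵥ w = (x ⬝ᵥ x) * (1 - k ^ 2 / ((x ⬝ᵥ x) * (y ⬝ᵥ y))) := by
    simp only [w, sub_dotProduct, dotProduct_sub, smul_dotProduct, dotProduct_smul, smul_eq_mul,
      hyx, ← hkdef]
    field_simp
    ring
  have hwy : w ⬝ᵥ y = 0 := by
    simp only [w, sub_dotProduct, smul_dotProduct, smul_eq_mul, ← hkdef]
    field_simp
    ring
  have hww0 : 0 ≤ w ⬝ᵥ w := Finset.sum_nonneg fun i _ => mul_self_nonneg _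
  have hr0 : 0 ≤ 1 - k ^ 2 / ((x ⬝ᵥ x) * (y ⬝ᵥ y)) := by
    rw [hww] at hww0
    exact nonneg_of_mul_nonneg_right hww0 hxx
  have hs2 : s ^ 2 = 1 - k ^ 2 / ((x ⬝ᵥ x) * (y ⬝ᵥ y)) := Real.sq_sqrt hr0
  have hs1 : s < 1 := by
    have : 0 < k ^ 2 / ((x ⬝ᵥ x) * (y ⬝ᵥ y)) := by positivity
    nlinarith
  rw [← hs2] at hww
  have hsw : s • (s⁻¹ • w) = w := by
    by_cases h : s = 0
    · have : w = 0 := by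
        apply dotProduct_self_eq_zero.1
        rw [hww, h]; ring
      simp [this]
    · rw [smul_smul, mul_inv_cancel₀ h, one_smul]
  have hqy : (s⁻¹ • w) ⬝ᵥ y = 0 := by rw [smul_dotProduct, hwy, smul_zero]
  have hqq : s * ((x ⬝ᵥ x) - (s⁻¹ • w) ⬝ᵥ (s⁻¹ • w)) = 0 := by
    by_cases h : s = 0
    · simp [h]
    · simp only [smul_dotProduct, dotProduct_smul, hww, smul_eq_mul]
      field_simp
      ring
  set q := s⁻¹ • w with hq
  let m := (y ⬝ᵥ y) / k
  have hm : 0 < m := div_pos hyy hk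
  have hvne : x - q ≠ 0 := by
    intro h
    have h2 : (x - q) ⬝ᵥ y = 0 := by rw [h, zero_dotProduct]
    rw [sub_dotProduct, hqy, ← hkdef] at h2
    linarith
  have hpne : x + q ≠ 0 := by
    intro h
    have h2 : (x + q) ⬝ᵥ y = 0 := by rw [h, zero_dotProduct]
    rw [add_dotProduct, hqy, ← hkdef] at h2
    linarith
  obtain ⟨C, hC, hCv, hCp, hcond⟩ := aux_C (x - q) (x + q) (m * (1 - s)) (m * (1 + s))
    (mul_pos hm (by linarith)) (by nlinarith) hvne hpne (by
      have h1 : (x - q) ⬝ᵥ (x + q) = (x ⬝ᵥ x) - q ⬝ᵥ q := by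
        simp only [sub_dotProduct, dotProduct_add, dotProduct_comm q x]
        ring
      rw [h1]
      linear_combination 2 * m * hqq)
  have hcond' : condNum hC.isHermitian = (1 + s) / (1 - s) := by
    rw [hcond, mul_div_mul_left _ _ hm.ne']
  have hs1' : 1 - s ≠ 0 := by linarith
  refine ⟨C, hC, ?_, ?_, hcond'⟩
  · have hsum : (2 : ℝ) • (C *ᵥ x) = C *ᵥ (x - q) + C *ᵥ (x + q) := by
      rw [← mulVec_add, ← mulVec_smul]
      congr 1
      ext i
      simp
      ring
    rw [hCv, hCp] at hsum
    ext i
    have h1 := congrFun hsum i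
    have h2 := congrFun hsw i
    have h3 : m * (k / (y ⬝ᵥ y)) = 1 := by
      simp only [m]; field_simp
    simp only [Pi.smul_apply, Pi.add_apply, Pi.sub_apply, smul_eq_mul, w] at h1 h2
    linear_combination h1 / 2 + m * h2 + y i * h3
  · rw [hcond']
    field_simp
    ring
end

section
/- Let x be a fixed nonzero vector in ℝⁿ and let κmax ≥ 1. Then { Cx : C an n×n real symmetric positive definite matrix with κ(C) ≤ κmax } = { y ∈ ℝⁿ : y ≠ 0, ⟨x,y⟩ > 0, and sin ∠(x,y) ≤ (κmax − 1)/(κmax + 1) }; that is, the set of all images of x under real SPD matrices whose condition number is at most κmax is exactly the pointed circular cone of vectors making an acute angle with x whose sine is at most (κmax − 1)/(κmax + 1). -/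
open Matrix

lemma sin_vangle_iff {n : ℕ} (x y : Fin n → ℝ) (hX : 0 < x ⬝ᵥ x) (hY : 0 < y ⬝ᵥ y)
    (k : ℝ) (hk : 1 ≤ k) :
    Real.sin (vangle x y) ≤ (k - 1) / (k + 1) ↔
      4 * k * ((x ⬝ᵥ x) * (y ⬝ᵥ y)) ≤ (k + 1) ^ 2 * (x ⬝ᵥ y) ^ 2 := by
  have hk1 : 0 < k + 1 := by linarith
  have h0 : 0 ≤ (k - 1) / (k + 1) := div_nonneg (by linarith) hk1.le
  unfold vangle vnorm
  rw [Real.sin_arccos, Real.sqrt_le_iff, div_pow, mul_pow, Real.sq_sqrt hX.le, Real.sq_sqrt hY.le]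
  have hXY := mul_pos hX hY
  have e : (x ⬝ᵥ y) ^ 2 / ((x ⬝ᵥ x) * (y ⬝ᵥ y)) - (1 - ((k - 1) / (k + 1)) ^ 2)
      = ((k + 1) ^ 2 * (x ⬝ᵥ y) ^ 2 - 4 * k * ((x ⬝ᵥ x) * (y ⬝ᵥ y)))
        / ((k + 1) ^ 2 * ((x ⬝ᵥ x) * (y ⬝ᵥ y))) := by
    field_simp
    ring
  have hpos : 0 < (k + 1) ^ 2 * ((x ⬝ᵥ x) * (y ⬝ᵥ y)) := by positivity
  constructor
  · rintro ⟨-, h⟩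
    have : 0 ≤ ((k + 1) ^ 2 * (x ⬝ᵥ y) ^ 2 - 4 * k * ((x ⬝ᵥ x) * (y ⬝ᵥ y)))
        / ((k + 1) ^ 2 * ((x ⬝ᵥ x) * (y ⬝ᵥ y))) := by rw [← e]; linarith
    rw [le_div_iff₀ hpos] at this
    linarith
  · intro h
    refine ⟨h0, ?_⟩
    have : 0 ≤ ((k + 1) ^ 2 * (x ⬝ᵥ y) ^ 2 - 4 * k * ((x ⬝ᵥ x) * (y ⬝ᵥ y)))
        / ((k + 1) ^ 2 * ((x ⬝ᵥ x) * (y ⬝ᵥ y))) := div_nonneg (by linarith) hpos.le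
    linarith

lemma dot_self_pos {n : ℕ} {x : Fin n → ℝ} (hx : x ≠ 0) : 0 < x ⬝ᵥ x := by
  have h := Matrix.dotProduct_star_self_pos_iff (v := x)
  simpa using h.2 hx

lemma spec_ineq {n : ℕ} {C : Matrix (Fin n) (Fin n) ℝ} (hC : C.IsHermitian) (a b : ℝ)
    (ha : ∀ i, a ≤ hC.eigenvalues i) (hb : ∀ i, hC.eigenvalues i ≤ b) (x : Fin n → ℝ) :
    0 ≤ (C *ᵥ x - a • x) ⬝ᵥ (b • x - C *ᵥ x) := by
  have hT : Cᵀ = C := by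
    have h : Cᴴ = C := hC
    rwa [conjTranspose_eq_transpose_of_trivial] at h
  have key : ∀ (i : Fin n), (hC.eigenvectorBasis i).ofLp ⬝ᵥ (C *ᵥ x)
      = hC.eigenvalues i * ((hC.eigenvectorBasis i).ofLp ⬝ᵥ x) := by
    intro i
    have := hC.mulVec_eigenvectorBasis i
    rw [Matrix.dotProduct_mulVec, ← Matrix.mulVec_transpose, hT, this, smul_dotProduct, smul_eq_mul]
  have h := hC.eigenvectorBasis.sum_inner_mul_inner
    (WithLp.toLp 2 (C *ᵥ x - a • x)) (WithLp.toLp 2 (b • x - C *ᵥ x))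
  have h2 : (inner ℝ (WithLp.toLp 2 (C *ᵥ x - a • x)) (WithLp.toLp 2 (b • x - C *ᵥ x)) : ℝ)
    = (C *ᵥ x - a • x) ⬝ᵥ (b • x - C *ᵥ x) := by
    simp [EuclideanSpace.inner_eq_star_dotProduct, dotProduct_comm]
  rw [← h2, ← h]
  refine Finset.sum_nonneg fun i _ => ?_
  simp only [EuclideanSpace.inner_eq_star_dotProduct, star_trivial]
  rw [dotProduct_comm (b • x - C *ᵥ x)]
  simp only [dotProduct_sub, dotProduct_smul, key, smul_eq_mul]
  have := mul_nonneg (mul_nonneg (sub_nonneg.2 (ha i)) (sub_nonneg.2 (hb i)))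
    (sq_nonneg ((hC.eigenvectorBasis i).ofLp ⬝ᵥ x))
  nlinarith

lemma eig_bounds {n : ℕ} {C : Matrix (Fin n) (Fin n) ℝ} (hC : C.IsHermitian) (a b : ℝ)
    (ha : ∀ z, a * (z ⬝ᵥ z) ≤ z ⬝ᵥ (C *ᵥ z)) (hb : ∀ z, z ⬝ᵥ (C *ᵥ z) ≤ b * (z ⬝ᵥ z))
    (i : Fin n) : a ≤ hC.eigenvalues i ∧ hC.eigenvalues i ≤ b := by
  have h1 : (hC.eigenvectorBasis i).ofLp ⬝ᵥ (hC.eigenvectorBasis i).ofLp = 1 := by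
    have := hC.eigenvectorBasis.inner_eq_one i
    rw [EuclideanSpace.inner_eq_star_dotProduct] at this
    simpa only [star_trivial] using this
  have h2 : (hC.eigenvectorBasis i).ofLp ⬝ᵥ (C *ᵥ (hC.eigenvectorBasis i).ofLp)
      = hC.eigenvalues i := by
    rw [hC.mulVec_eigenvectorBasis i, dotProduct_smul, h1, smul_eq_mul, mul_one]
  have h3 := ha (hC.eigenvectorBasis i).ofLp
  have h4 := hb (hC.eigenvectorBasis i).ofLp
  rw [h1, h2] at h3 h4
  constructor <;> linarith

/-- For a fixed nonzero `x ∈ ℝⁿ` and `κmax ≥ 1`, the set of images of `x`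
under all real SPD matrices with condition number at most `κmax` is exactly the pointed
circular cone of vectors making an acute angle with `x` whose sine is at most
`(κmax − 1)/(κmax + 1)`. -/
theorem cone_of_posDef_images {n : ℕ} (x : Fin n → ℝ) (hx : x ≠ 0) (κmax : ℝ) (hκ : 1 ≤ κmax) :
    {y : Fin n → ℝ | ∃ (C : Matrix (Fin n) (Fin n) ℝ) (hC : C.PosDef),
        condNum hC.isHermitian ≤ κmax ∧ C *ᵥ x = y}
      = {y : Fin n → ℝ | y ≠ 0 ∧ 0 < x ⬝ᵥ y ∧
          Real.sin (vangle x y) ≤ (κmax - 1) / (κmax + 1)} := by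
  obtain ⟨i0, hi0⟩ : ∃ i, x i ≠ 0 := by
    by_contra! h
    exact hx (funext h)
  have : Nonempty (Fin n) := ⟨i0⟩
  have hX := dot_self_pos hx
  ext y
  simp only [Set.mem_ofPred_eq]
  constructor
  · rintro ⟨C, hC, hcond, rfl⟩
    have hp : 0 < x ⬝ᵥ (C *ᵥ x) := by
      simpa using hC.dotProduct_mulVec_pos hx
    have hy : C *ᵥ x ≠ 0 := by
      intro h
      rw [h, dotProduct_zero] at hp
      exact lt_irrefl _ hp
    have hY := dot_self_pos hy
    refine ⟨hy, hp, (sin_vangle_iff x _ hX hY κmax hκ).2 ?_⟩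
    set a := ⨅ i, hC.isHermitian.eigenvalues i with hadef
    obtain ⟨j, hj⟩ := exists_eq_ciInf_of_finite (f := hC.isHermitian.eigenvalues)
    have ha0 : 0 < a := by
      rw [hadef, ← hj]
      exact hC.eigenvalues_pos j
    have ha : ∀ i, a ≤ hC.isHermitian.eigenvalues i := fun i =>
      ciInf_le (Set.finite_range _).bddBelow i
    have hb : ∀ i, hC.isHermitian.eigenvalues i ≤ κmax * a := by
      intro i
      have h1 : hC.isHermitian.eigenvalues i ≤ ⨆ i, hC.isHermitian.eigenvalues i :=
        le_ciSup (Set.finite_range _).bddAbove i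
      unfold condNum at hcond
      rw [← hadef, div_le_iff₀ ha0] at hcond
      linarith
    have h := spec_ineq hC.isHermitian a (κmax * a) ha hb x
    simp only [dotProduct_sub, sub_dotProduct, dotProduct_smul, smul_dotProduct, smul_eq_mul,
      dotProduct_comm (C *ᵥ x) x] at h
    set p := x ⬝ᵥ (C *ᵥ x)
    set Y := (C *ᵥ x) ⬝ᵥ (C *ᵥ x)
    set X := x ⬝ᵥ x
    have h' : Y + κmax * a ^ 2 * X ≤ (1 + κmax) * a * p := by nlinarith
    have h0 : 0 ≤ Y + κmax * a ^ 2 * X := by positivity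
    have h2 := pow_le_pow_left₀ h0 h' 2
    have h3 := sq_nonneg (Y - κmax * a ^ 2 * X)
    have h4 : a ^ 2 * (4 * κmax * (X * Y)) ≤ a ^ 2 * ((κmax + 1) ^ 2 * p ^ 2) := by nlinarith
    exact le_of_mul_le_mul_left h4 (by positivity)
  · rintro ⟨hy, hp, hs⟩
    have hY := dot_self_pos hy
    rw [sin_vangle_iff x _ hX hY κmax hκ] at hs
    obtain ⟨a, ha⟩ : ∃ a, a = 2 * (y ⬝ᵥ y) / ((κmax + 1) * (x ⬝ᵥ y)) := ⟨_, rfl⟩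
    have hk1 : 0 < κmax + 1 := by linarith
    have ha0 : 0 < a := by rw [ha]; positivity
    have ha1 : a * ((κmax + 1) * (x ⬝ᵥ y)) = 2 * (y ⬝ᵥ y) := by rw [ha]; field_simp
    have hmain : κmax * a ^ 2 * (x ⬝ᵥ x) ≤ y ⬝ᵥ y := by
      have h1 : (y ⬝ᵥ y) * (4 * (κmax * a ^ 2 * (x ⬝ᵥ x))) ≤ (y ⬝ᵥ y) * (4 * (y ⬝ᵥ y)) := by
        calc (y ⬝ᵥ y) * (4 * (κmax * a ^ 2 * (x ⬝ᵥ x)))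
            = a ^ 2 * (4 * κmax * ((x ⬝ᵥ x) * (y ⬝ᵥ y))) := by ring
          _ ≤ a ^ 2 * ((κmax + 1) ^ 2 * (x ⬝ᵥ y) ^ 2) := by gcongr
          _ = (a * ((κmax + 1) * (x ⬝ᵥ y))) ^ 2 := by ring
          _ = (y ⬝ᵥ y) * (4 * (y ⬝ᵥ y)) := by rw [ha1]; ring
      have := le_of_mul_le_mul_left h1 hY
      linarith
    obtain ⟨v, hv⟩ : ∃ v, v = (κmax * a) • x - y := ⟨_, rfl⟩
    have hvx : v ⬝ᵥ x = κmax * a * (x ⬝ᵥ x) - x ⬝ᵥ y := by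
      simp [hv, sub_dotProduct, smul_dotProduct, dotProduct_comm y x]
    have hvv : v ⬝ᵥ v ≤ (κmax * a - a) * (v ⬝ᵥ x) := by
      rw [hvx]
      simp only [hv, dotProduct_sub, sub_dotProduct, dotProduct_smul, smul_dotProduct, smul_eq_mul,
        dotProduct_comm y x]
      nlinarith
    have hvv0 : 0 ≤ v ⬝ᵥ v := by
      exact Finset.sum_nonneg fun i _ => mul_self_nonneg _
    have hcase : v = 0 ∨ 0 < v ⬝ᵥ x := by
      by_cases h : v = 0
      · exact Or.inl h
      · right
        have h1 := dot_self_pos h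
        have h2 : 0 ≤ κmax * a - a := by nlinarith
        by_contra! h3
        nlinarith [mul_nonneg h2 (neg_nonneg.2 h3)]
    obtain ⟨g, hg⟩ : ∃ g, g = (v ⬝ᵥ x)⁻¹ := ⟨_, rfl⟩
    have hg0 : 0 ≤ g := by
      rw [hg]
      rcases hcase with h | h
      · simp [h]
      · positivity
    have hgv : g * (v ⬝ᵥ v) ≤ κmax * a - a := by
      rcases hcase with h | h
      · have : 0 ≤ κmax * a - a := by nlinarith
        simpa [h] using this
      · rw [hg, inv_mul_le_iff₀ h]
        linarith
    obtain ⟨C, hCdef⟩ : ∃ C : Matrix (Fin n) (Fin n) ℝ,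
      C = (κmax * a) • (1 : Matrix (Fin n) (Fin n) ℝ) - g • vecMulVec v v := ⟨_, rfl⟩
    have hCz : ∀ z, C *ᵥ z = (κmax * a) • z - (g * (v ⬝ᵥ z)) • v := by
      intro z
      rw [hCdef, sub_mulVec, smul_mulVec, smul_mulVec, one_mulVec, vecMulVec_mulVec]
      ext i
      simp
      ring
    have hq : ∀ z, z ⬝ᵥ (C *ᵥ z) = κmax * a * (z ⬝ᵥ z) - g * (v ⬝ᵥ z) ^ 2 := by
      intro z
      rw [hCz, dotProduct_sub, dotProduct_smul, dotProduct_smul, dotProduct_comm z v]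
      simp only [smul_eq_mul]
      ring
    have hcs : ∀ z, (v ⬝ᵥ z) ^ 2 ≤ (v ⬝ᵥ v) * (z ⬝ᵥ z) := by
      intro z
      have := Finset.sum_mul_sq_le_sq_mul_sq Finset.univ v z
      simpa [dotProduct, sq] using this
    have hzz : ∀ z : Fin n → ℝ, 0 ≤ z ⬝ᵥ z := fun z => by
      exact Finset.sum_nonneg fun i _ => mul_self_nonneg _
    have hlo : ∀ z, a * (z ⬝ᵥ z) ≤ z ⬝ᵥ (C *ᵥ z) := by
      intro z
      rw [hq]
      have h1 := mul_le_mul_of_nonneg_left (hcs z) hg0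
      have h2 := mul_le_mul_of_nonneg_right hgv (hzz z)
      nlinarith
    have hhi : ∀ z, z ⬝ᵥ (C *ᵥ z) ≤ κmax * a * (z ⬝ᵥ z) := by
      intro z
      rw [hq]
      nlinarith [mul_nonneg hg0 (sq_nonneg (v ⬝ᵥ z))]
    have hH : C.IsHermitian := by
      rw [hCdef]
      ext i j
      simp [vecMulVec_apply, Matrix.one_apply, eq_comm, mul_comm]
    have hPD : C.PosDef := by
      refine Matrix.PosDef.of_dotProduct_mulVec_pos hH fun z hz => ?_
      have := hlo z
      have h2 := mul_pos ha0 (dot_self_pos hz)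
      simpa using lt_of_lt_of_le h2 this
    refine ⟨C, hPD, ?_, ?_⟩
    · have hb := eig_bounds hPD.isHermitian a (κmax * a) hlo hhi
      have h1 : a ≤ ⨅ i, hPD.isHermitian.eigenvalues i := le_ciInf fun i => (hb i).1
      have h2 : ⨆ i, hPD.isHermitian.eigenvalues i ≤ κmax * a := ciSup_le fun i => (hb i).2
      unfold condNum
      rw [div_le_iff₀ (lt_of_lt_of_le ha0 h1)]
      nlinarith
    · rw [hCz]
      rcases hcase with h | h
      · rw [h, smul_zero, sub_zero]
        exact sub_eq_zero.1 (hv ▸ h)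
      · rw [hg, inv_mul_cancel₀ h.ne', one_smul, hv]
        abel
end

section
/- In the preconditioned method with variable preconditioning, suppose x_l ≠ x* for all l ≤ k. Then the direction vectors p₀, …, p_k are all nonzero (so the method is well-defined through step k), the directions satisfy ⟨p_i, p_j⟩_A = 0 for all k − m_k ≤ i < j ≤ k, and the next error satisfies ⟨e_{k+1}, s_k⟩_A = 0 and ⟨e_{k+1}, p_i⟩_A = 0 for all k − m_k ≤ i ≤ k. -/
open Matrix

/-- In the preconditioned method with variable preconditioning, if
`x l ≠ x*` for all `l ≤ k`, then the directions `p 0, …, p k` are nonzero (the method is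
well-defined through step `k`), the directions `p i` for `k − m k ≤ i < j ≤ k` are pairwise
`A`-orthogonal, and the next error is `A`-orthogonal to `s k` and to `p i` for
`k − m k ≤ i ≤ k`. -/
theorem local_orthogonality
    {n : ℕ} (A : Matrix (Fin n) (Fin n) ℝ) (hA : A.PosDef)
    (b x0 : Fin n → ℝ)
    (B : ℕ → Matrix (Fin n) (Fin n) ℝ) (hB : ∀ k, (B k).PosDef)
    (m : ℕ → ℕ) (hm0 : m 0 = 0) (hmle : ∀ k, m k ≤ k) (hmsucc : ∀ k, m (k + 1) ≤ m k + 1)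
    (x r s p e : ℕ → Fin n → ℝ)
    (hx0 : x 0 = x0)
    (hr : ∀ k, r k = b - A *ᵥ x k)
    (hs : ∀ k, s k = (B k)⁻¹ *ᵥ r k)
    (hp : ∀ k, p k = s k - ∑ l ∈ Finset.Ico (k - m k) k,
        (((A *ᵥ s k) ⬝ᵥ p l) / ((A *ᵥ p l) ⬝ᵥ p l)) • p l)
    (hxs : ∀ k, x (k + 1) = x k + ((r k ⬝ᵥ p k) / ((A *ᵥ p k) ⬝ᵥ p k)) • p k)
    (he : ∀ k, e k = A⁻¹ *ᵥ b - x k)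
    (k : ℕ) (hexact : ∀ l ≤ k, x l ≠ A⁻¹ *ᵥ b) :
    (∀ l ≤ k, p l ≠ 0) ∧
    (∀ i j, k - m k ≤ i → i < j → j ≤ k → (A *ᵥ p i) ⬝ᵥ p j = 0) ∧
    ((A *ᵥ e (k + 1)) ⬝ᵥ s k = 0) ∧
    (∀ i, k - m k ≤ i → i ≤ k → (A *ᵥ e (k + 1)) ⬝ᵥ p i = 0) := by
  have sym : ∀ u v : Fin n → ℝ, (A *ᵥ u) ⬝ᵥ v = (A *ᵥ v) ⬝ᵥ u := by
    intro u v
    have hT : Aᵀ = A := by simpa using hA.isHermitian.eq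
    rw [dotProduct_comm, dotProduct_mulVec, ← mulVec_transpose, hT]
  have pos : ∀ v : Fin n → ℝ, v ≠ 0 → (A *ᵥ v) ⬝ᵥ v ≠ 0 := by
    intro v hv
    have := hA.dotProduct_mulVec_pos hv
    rw [dotProduct_comm]
    simpa using this.ne'
  have hAu : IsUnit A.det := (Matrix.isUnit_iff_isUnit_det A).1 hA.isUnit
  have hAe : ∀ k, A *ᵥ e k = r k := by
    intro k
    rw [he, hr, mulVec_sub, mulVec_mulVec, Matrix.mul_nonsing_inv A hAu, one_mulVec]
  have hrs : ∀ k, r (k + 1) = r k - ((r k ⬝ᵥ p k) / ((A *ᵥ p k) ⬝ᵥ p k)) • (A *ᵥ p k) := by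
    intro k
    rw [hr (k+1), hxs, mulVec_add, mulVec_smul, ← sub_sub, ← hr]
  have step : ∀ k,
      (∀ i j, k - m k ≤ i → i < j → j < k → (A *ᵥ p i) ⬝ᵥ p j = 0) →
      (∀ i, k - m k ≤ i → i < k → r k ⬝ᵥ p i = 0) →
      (∀ i j, k - m k ≤ i → i < j → j ≤ k → (A *ᵥ p i) ⬝ᵥ p j = 0) ∧
      (∀ i, k - m k ≤ i → i ≤ k → r (k + 1) ⬝ᵥ p i = 0) := by
    intro k h1 h2
    have h3 : ∀ i j, k - m k ≤ i → i < j → j ≤ k → (A *ᵥ p i) ⬝ᵥ p j = 0 := by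
      intro i j hi hij hj
      rcases hj.lt_or_eq with hj | rfl
      · exact h1 i j hi hij hj
      · rw [hp j, dotProduct_sub, dotProduct_sum, Finset.sum_eq_single i]
        · rw [dotProduct_smul, smul_eq_mul, sym (p i) (s j)]
          by_cases hz : p i = 0
          · simp [hz]
          · rw [div_mul_cancel₀ _ (pos _ hz), sub_self]
        · intro l hl hli
          rw [Finset.mem_Ico] at hl
          rw [dotProduct_smul]
          rcases lt_or_gt_of_ne hli with h | h
          · rw [sym (p i) (p l), h1 l i hl.1 h hij, smul_zero]
          · rw [h1 i l hi h hl.2, smul_zero]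
        · intro h
          exact absurd (Finset.mem_Ico.2 ⟨hi, hij⟩) h
    refine ⟨h3, ?_⟩
    intro i hi hik
    rw [hrs, sub_dotProduct, smul_dotProduct, smul_eq_mul]
    rcases hik.lt_or_eq with hik | rfl
    · rw [h2 i hi hik, sym (p k) (p i), h3 i k hi hik le_rfl]
      simp
    · by_cases hz : p i = 0
      · simp [hz]
      · rw [div_mul_cancel₀ _ (pos _ hz), sub_self]
  have H : ∀ k, 
      (∀ i j, k - m k ≤ i → i < j → j < k → (A *ᵥ p i) ⬝ᵥ p j = 0) ∧
      (∀ i, k - m k ≤ i → i < k → r k ⬝ᵥ p i = 0) := by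
    intro k
    induction k with
    | zero => exact ⟨fun i j _ _ h => absurd h (by omega), fun i _ h => absurd h (by omega)⟩
    | succ k ih =>
      obtain ⟨g1, g2⟩ := step k ih.1 ih.2
      have := hmsucc k
      exact ⟨fun i j hi hij hj => g1 i j (by omega) hij (by omega),
        fun i hi hik => g2 i (by omega) (by omega)⟩
  obtain ⟨g1, g2⟩ := step k (H k).1 (H k).2
  refine ⟨?_, g1, ?_, ?_⟩
  · intro l hl hz
    have hrl : r l ≠ 0 := by
      intro h0
      apply hexact l hl
      have h4 : b = A *ᵥ x l := by
        have := hr l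
        rw [h0] at this
        exact (sub_eq_zero.1 this.symm)
      rw [h4, mulVec_mulVec, Matrix.nonsing_inv_mul A hAu, one_mulVec]
    have h5 : r l ⬝ᵥ p l = r l ⬝ᵥ s l := by
      conv_lhs => rw [hp l]
      rw [dotProduct_sub, dotProduct_sum, Finset.sum_eq_zero, sub_zero]
      intro i hi
      rw [Finset.mem_Ico] at hi
      rw [dotProduct_smul, (H l).2 i hi.1 hi.2, smul_zero]
    have h6 := (hB l).inv.dotProduct_mulVec_pos hrl
    rw [← hs l] at h6
    rw [hz, dotProduct_zero] at h5
    simp only [star_trivial] at h6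
    exact h6.ne h5
  · rw [hAe]
    have h7 : r (k + 1) ⬝ᵥ p k = 0 := g2 k (by omega) le_rfl
    rw [hp k, dotProduct_sub, dotProduct_sum, Finset.sum_eq_zero, sub_zero] at h7
    · exact h7
    · intro i hi
      rw [Finset.mem_Ico] at hi
      rw [dotProduct_smul, g2 i hi.1 hi.2.le, smul_zero]
  · intro i hi hik
    rw [hAe]
    exact g2 i hi hik
end

section
/- In the preconditioned method with variable preconditioning, suppose x_l ≠ x* for all l ≤ k. Then the error e_{k+1} is locally optimal: ‖e_{k+1}‖_A = min over all p in span{s_k, p_{k−m_k}, …, p_{k−1}} of ‖e_k − p‖_A; in particular ‖e_{k+1}‖_A ≤ ‖e_k − p‖_A for every vector p in that span. -/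
open Matrix

/-- The `A`-norm `‖x‖_A = √⟨A x, x⟩`. -/
noncomputable def anorm {n : ℕ} (A : Matrix (Fin n) (Fin n) ℝ) (x : Fin n → ℝ) : ℝ :=
  Real.sqrt ((A *ᵥ x) ⬝ᵥ x)

/-- Local optimality: in the preconditioned method with variable
preconditioning, if `x l ≠ x*` for all `l ≤ k`, then `‖e (k+1)‖_A` is the minimum of
`‖e k − p‖_A` over all `p` in `span {s k, p (k − m k), …, p (k−1)}` (the minimum is
attained, and `‖e (k+1)‖_A ≤ ‖e k − p‖_A` for every `p` in that span). -/
theorem local_optimality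
    {n : ℕ} (A : Matrix (Fin n) (Fin n) ℝ) (hA : A.PosDef)
    (b x0 : Fin n → ℝ)
    (B : ℕ → Matrix (Fin n) (Fin n) ℝ) (hB : ∀ k, (B k).PosDef)
    (m : ℕ → ℕ) (hm0 : m 0 = 0) (hmle : ∀ k, m k ≤ k) (hmsucc : ∀ k, m (k + 1) ≤ m k + 1)
    (x r s p e : ℕ → Fin n → ℝ)
    (hx0 : x 0 = x0)
    (hr : ∀ k, r k = b - A *ᵥ x k)
    (hs : ∀ k, s k = (B k)⁻¹ *ᵥ r k)
    (hp : ∀ k, p k = s k - ∑ l ∈ Finset.Ico (k - m k) k,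
        (((A *ᵥ s k) ⬝ᵥ p l) / ((A *ᵥ p l) ⬝ᵥ p l)) • p l)
    (hxs : ∀ k, x (k + 1) = x k + ((r k ⬝ᵥ p k) / ((A *ᵥ p k) ⬝ᵥ p k)) • p k)
    (he : ∀ k, e k = A⁻¹ *ᵥ b - x k)
    (k : ℕ) (hexact : ∀ l ≤ k, x l ≠ A⁻¹ *ᵥ b) :
    IsLeast
      {t : ℝ | ∃ q ∈ Submodule.span ℝ (insert (s k) (p '' Set.Ico (k - m k) k)),
        t = anorm A (e k - q)}
      (anorm A (e (k + 1))) := by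
  obtain ⟨D, hD⟩ : ∃ D : (Fin n → ℝ) →ₗ[ℝ] (Fin n → ℝ) →ₗ[ℝ] ℝ,
      ∀ u v, (A *ᵥ u) ⬝ᵥ v = D u v :=
    ⟨LinearMap.mk₂ ℝ (fun u v => (A *ᵥ u) ⬝ᵥ v)
      (by intros; simp [mulVec_add, add_dotProduct])
      (by intros; simp [mulVec_smul, smul_dotProduct])
      (by intros; simp [dotProduct_add])
      (by intros; simp [dotProduct_smul]), fun u v => rfl⟩
  have hAt : Aᵀ = A := by
    have h := hA.isHermitian
    rwa [Matrix.IsHermitian, conjTranspose_eq_transpose_of_trivial] at h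
  have hsymm : ∀ u v, D u v = D v u := by
    intro u v
    rw [← hD, ← hD, dotProduct_comm (A *ᵥ v) u, dotProduct_mulVec, ← mulVec_transpose, hAt]
  have hpos : ∀ u, u ≠ 0 → 0 < D u u := by
    intro u hu
    have h := hA.dotProduct_mulVec_pos hu
    rw [← hD, dotProduct_comm]
    simpa using h
  have hnn : ∀ u, 0 ≤ D u u := by
    intro u
    by_cases hu : u = 0
    · simp [hu]
    · exact (hpos u hu).le
  have hcancel : ∀ c u v, (u = 0 → c = 0) → v = u → c / D u u * D v u = c := by
    intro c u v h hv
    subst hv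
    by_cases hu : v = 0
    · simp [h hu]
    · exact div_mul_cancel₀ _ (hpos v hu).ne'
  have hAe : ∀ j, A *ᵥ e j = r j := by
    intro j
    rw [he, hr, mulVec_sub, mulVec_mulVec, mul_nonsing_inv _ ((isUnit_iff_isUnit_det A).1 hA.isUnit),
      one_mulVec]
  have hrp : ∀ j v, r j ⬝ᵥ v = D (e j) v := by
    intro j v
    rw [← hAe, hD]
  simp only [hD, hrp] at hp hxs
  have hes : ∀ j, e (j + 1) = e j - (D (e j) (p j) / D (p j) (p j)) • p j := by
    intro j
    rw [he, hxs, he j]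
    abel
  have hpp : ∀ j, ∀ l ∈ Finset.Ico (j - m j) j, D (p j) (p l) = 0 := by
    intro j
    induction j using Nat.strong_induction_on with
    | _ j ih =>
      intro l hl
      have hmono : ∀ i ≤ j, i - m i ≤ j - m j := by
        intro i hi
        have : Monotone (fun i => i - m i) := by
          apply monotone_nat_of_le_succ
          intro i
          have := hmsucc i
          show i - m i ≤ i + 1 - m (i + 1)
          omega
        exact this hi
      rw [hp j, map_sub, LinearMap.sub_apply, map_sum, LinearMap.sum_apply,
        Finset.sum_eq_single_of_mem l hl]
      · rw [map_smul, LinearMap.smul_apply, smul_eq_mul, hcancel _ _ _ _ rfl, sub_self]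
        intro h
        simp [h]
      · intro i hi hil
        rw [map_smul, LinearMap.smul_apply, smul_eq_mul]
        rw [Finset.mem_Ico] at hi hl
        have h1 := hmono i hi.2.le
        have h2 := hmono l hl.2.le
        rcases lt_or_gt_of_ne hil with h | h
        · rw [hsymm (p i) (p l), ih l hl.2 i (Finset.mem_Ico.2 ⟨by omega, h⟩), mul_zero]
        · rw [ih i hi.2 l (Finset.mem_Ico.2 ⟨by omega, h⟩), mul_zero]
  have hself : ∀ j, D (e (j + 1)) (p j) = 0 := by
    intro j
    rw [hes, map_sub, LinearMap.sub_apply, map_smul, LinearMap.smul_apply, smul_eq_mul,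
      hcancel _ _ _ _ rfl, sub_self]
    intro h
    simp [h]
  have hep' : ∀ j, (∀ l ∈ Finset.Ico (j - m j) j, D (e j) (p l) = 0) →
      ∀ l ∈ Finset.Ico (j - m j) j, D (e (j + 1)) (p l) = 0 := by
    intro j h l hl
    rw [hes, map_sub, LinearMap.sub_apply, map_smul, LinearMap.smul_apply, h l hl, hpp j l hl]
    simp
  have hep : ∀ j, ∀ l ∈ Finset.Ico (j - m j) j, D (e j) (p l) = 0 := by
    intro j
    induction j with
    | zero => simp
    | succ j ih =>
      intro l hl
      rw [Finset.mem_Ico] at hl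
      have := hmsucc j
      rcases eq_or_ne l j with rfl | h
      · exact hself l
      · exact hep' j ih l (Finset.mem_Ico.2 ⟨by omega, by omega⟩)
  have hwin := hep' k (hep k)
  have hsk : D (e (k + 1)) (s k) = 0 := by
    have h := hself k
    rw [hp k, map_sub, map_sum, Finset.sum_eq_zero, sub_zero] at h
    · exact h
    · intro l hl
      rw [map_smul, hwin l hl, smul_zero]
  have horth : ∀ q ∈ Submodule.span ℝ (insert (s k) (p '' Set.Ico (k - m k) k)),
      D (e (k + 1)) q = 0 := by
    intro q hq
    have : Submodule.span ℝ (insert (s k) (p '' Set.Ico (k - m k) k))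
        ≤ LinearMap.ker (D (e (k + 1))) := by
      rw [Submodule.span_le]
      rintro v (rfl | ⟨l, hl, rfl⟩)
      · exact hsk
      · exact hwin l (Finset.mem_Ico.2 hl)
    exact this hq
  have hpk : p k ∈ Submodule.span ℝ (insert (s k) (p '' Set.Ico (k - m k) k)) := by
    rw [hp k]
    refine Submodule.sub_mem _ (Submodule.subset_span (Set.mem_insert _ _))
      (Submodule.sum_mem _ fun l hl => Submodule.smul_mem _ _ (Submodule.subset_span
        (Set.mem_insert_of_mem _ ⟨l, Finset.mem_Ico.1 hl, rfl⟩)))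
  constructor
  · exact ⟨_, Submodule.smul_mem _ _ hpk, by rw [hes k]⟩
  · rintro t ⟨q, hq, rfl⟩
    unfold anorm
    apply Real.sqrt_le_sqrt
    rw [hD, hD]
    have hw := Submodule.sub_mem _
      (Submodule.smul_mem _ (D (e k) (p k) / D (p k) (p k)) hpk) hq
    generalize hwd : (D (e k) (p k) / D (p k) (p k)) • p k - q = w at hw
    have h1 : e k - q = e (k + 1) + w := by
      rw [hes k, ← hwd]
      abel
    have h2 := horth w hw
    have h3 := hnn w
    rw [h1, LinearMap.map_add₂, map_add, map_add, hsymm w (e (k + 1)), h2]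
    linarith
end

section
/- In the preconditioned method with variable preconditioning, suppose x_l ≠ x* for all l ≤ k. Then the A-norm of the error e_{k+1} is bounded above by the A-norm of the error of one step of the preconditioned steepest descent method starting from x_k with preconditioner B_k: ‖e_{k+1}‖_A ≤ ‖e_k − α s_k‖_A for every real number α. -/
open Matrix

theorem pcg_abstract {V : Type*} [AddCommGroup V] [Module ℝ V] (f : V →ₗ[ℝ] V →ₗ[ℝ] ℝ)
    (hsym : ∀ u v, f u v = f v u) (hpos : ∀ u, 0 ≤ f u u) (hdef : ∀ u, f u u = 0 → u = 0)
    (w : ℕ → ℕ) (hw : Monotone w) (s p e : ℕ → V)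
    (hp : ∀ k, p k = s k - ∑ l ∈ Finset.Ico (w k) k, (f (s k) (p l) / f (p l) (p l)) • p l)
    (hes : ∀ k, e (k + 1) = e k - (f (e k) (p k) / f (p k) (p k)) • p k)
    (k : ℕ) (α : ℝ) : f (e (k + 1)) (e (k + 1)) ≤ f (e k - α • s k) (e k - α • s k) := by
  have hdiv : ∀ u v, f u v / f v v * f v v = f u v := by
    intro u v
    by_cases h : f v v = 0
    · have := hdef v h
      subst this
      simp
    · field_simp
  have hO : ∀ j, ∀ i, w j ≤ i → i < j → f (p j) (p i) = 0 := by
    intro j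
    induction j using Nat.strong_induction_on with
    | _ j ih =>
      intro i hwi hij
      rw [hp j]
      simp only [map_sub, map_sum, map_smul, LinearMap.sub_apply, LinearMap.sum_apply,
        LinearMap.smul_apply, smul_eq_mul]
      rw [Finset.sum_eq_single i, hdiv, sub_self]
      · intro l hl hli
        rw [Finset.mem_Ico] at hl
        rcases lt_or_gt_of_ne hli with h | h
        · rw [hsym (p l) (p i), ih i hij l ((hw hij.le).trans hl.1) h, mul_zero]
        · rw [ih l hl.2 i ((hw hl.2.le).trans hwi) h, mul_zero]
      · intro h
        exact absurd (Finset.mem_Ico.2 ⟨hwi, hij⟩) h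
  have hE0 : ∀ k, f (e (k + 1)) (p k) = 0 := by
    intro k
    rw [hes k]
    simp [hdiv]
  have hE : ∀ k, ∀ i, w k ≤ i → i < k → f (e k) (p i) = 0 := by
    intro k
    induction k with
    | zero => intro i _ h; omega
    | succ k ih =>
      intro i hwi hik
      rcases Nat.lt_succ_iff_lt_or_eq.1 hik with h | h
      · have h1 : w k ≤ i := (hw (Nat.le_succ k)).trans hwi
        rw [hes k]
        simp [ih i h1 h, hO k i h1 h]
      · subst h
        exact hE0 _
  set q := ∑ l ∈ Finset.Ico (w k) k, (f (s k) (p l) / f (p l) (p l)) • p l with hq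
  have hsk : s k = p k + q := by rw [hp k]; abel
  have hqe : f (e (k + 1)) q = 0 := by
    rw [hq, map_sum]
    refine Finset.sum_eq_zero fun l hl => ?_
    rw [Finset.mem_Ico] at hl
    rw [hes k]
    simp [hE k l hl.1 hl.2, hO k l hl.1 hl.2]
  set c := f (e k) (p k) / f (p k) (p k) with hc
  obtain ⟨v, hv⟩ : ∃ v, v = (c - α) • p k - α • q := ⟨_, rfl⟩
  have hev : e k - α • s k = e (k + 1) + v := by
    rw [hes k, hsk, hv]; module
  have h0 : f (e (k + 1)) v = 0 := by
    rw [hv]; simp [hqe, hE0 k]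
  have h1 : f v (e (k + 1)) = 0 := by rw [hsym, h0]
  rw [hev]
  simp only [map_add, LinearMap.add_apply, h0, h1]
  linarith [hpos v]

/-- In the preconditioned method with variable preconditioning, if
`x l ≠ x*` for all `l ≤ k`, then `‖e (k+1)‖_A` is bounded above by the `A`-norm of the error
of one step of the preconditioned steepest descent method from `x k` with preconditioner
`B k`: `‖e (k+1)‖_A ≤ ‖e k − α • s k‖_A` for every real `α`. -/
theorem pcg_le_psd_step
    {n : ℕ} (A : Matrix (Fin n) (Fin n) ℝ) (hA : A.PosDef)
    (b x0 : Fin n → ℝ)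
    (B : ℕ → Matrix (Fin n) (Fin n) ℝ) (hB : ∀ k, (B k).PosDef)
    (m : ℕ → ℕ) (hm0 : m 0 = 0) (hmle : ∀ k, m k ≤ k) (hmsucc : ∀ k, m (k + 1) ≤ m k + 1)
    (x r s p e : ℕ → Fin n → ℝ)
    (hx0 : x 0 = x0)
    (hr : ∀ k, r k = b - A *ᵥ x k)
    (hs : ∀ k, s k = (B k)⁻¹ *ᵥ r k)
    (hp : ∀ k, p k = s k - ∑ l ∈ Finset.Ico (k - m k) k,
        (((A *ᵥ s k) ⬝ᵥ p l) / ((A *ᵥ p l) ⬝ᵥ p l)) • p l)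
    (hxs : ∀ k, x (k + 1) = x k + ((r k ⬝ᵥ p k) / ((A *ᵥ p k) ⬝ᵥ p k)) • p k)
    (he : ∀ k, e k = A⁻¹ *ᵥ b - x k)
    (k : ℕ) (hexact : ∀ l ≤ k, x l ≠ A⁻¹ *ᵥ b) :
    ∀ α : ℝ, anorm A (e (k + 1)) ≤ anorm A (e k - α • s k) := by
  intro α
  have hT : Aᵀ = A := by simpa using hA.1.eq
  have hunit : IsUnit A.det := (Matrix.isUnit_iff_isUnit_det A).1 hA.isUnit
  let f : (Fin n → ℝ) →ₗ[ℝ] (Fin n → ℝ) →ₗ[ℝ] ℝ :=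
    LinearMap.mk₂ ℝ (fun u v => (A *ᵥ u) ⬝ᵥ v)
      (by intros; simp [Matrix.mulVec_add, add_dotProduct])
      (by intros; simp [Matrix.mulVec_smul])
      (by intros; simp [dotProduct_add])
      (by intros; simp)
  have hf : ∀ u v, f u v = (A *ᵥ u) ⬝ᵥ v := fun u v => rfl
  have hsym : ∀ u v, f u v = f v u := by
    intro u v
    rw [hf, hf, dotProduct_comm, Matrix.dotProduct_mulVec, ← Matrix.mulVec_transpose, hT]
  have hp0 : ∀ u, u ≠ 0 → 0 < f u u := by
    intro u hu
    have := hA.dotProduct_mulVec_pos hu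
    rw [hf, dotProduct_comm]
    simpa using this
  have hre : ∀ k, r k = A *ᵥ e k := by
    intro k
    rw [hr, he, Matrix.mulVec_sub, Matrix.mulVec_mulVec, Matrix.mul_nonsing_inv _ hunit,
      Matrix.one_mulVec]
  unfold anorm
  apply Real.sqrt_le_sqrt
  refine pcg_abstract f hsym ?_ ?_ (fun k => k - m k) ?_ s p e hp ?_ k α
  · intro u
    by_cases hu : u = 0
    · simp [hu]
    · exact (hp0 u hu).le
  · intro u h
    by_contra hu
    exact (hp0 u hu).ne' h
  · refine monotone_nat_of_le_succ fun k => ?_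
    have := hmsucc k
    have := hmle k
    show k - m k ≤ k + 1 - m (k + 1)
    omega
  · intro k
    rw [he, he k, hxs, hre, he k]
    simp only [hf]
    abel
end

section
/- In the preconditioned method with variable preconditioning, suppose k ≥ 1, m_k ≥ 1, and x_l ≠ x* for all l ≤ k. Then ‖e_{k+1}‖_A ≤ ‖e_k − α s_k − β (e_k − e_{k−1})‖_A for all real numbers α and β. -/
open Matrix

theorem pcg_aux {V : Type*} [AddCommGroup V] [Module ℝ V] (f : V →ₗ[ℝ] V →ₗ[ℝ] ℝ)
    (fsym : ∀ u v, f u v = f v u) (fpos : ∀ u, u ≠ 0 → 0 < f u u)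
    (m : ℕ → ℕ) (hmsucc : ∀ k, m (k + 1) ≤ m k + 1) (s p e : ℕ → V)
    (hp : ∀ k, p k = s k - ∑ l ∈ Finset.Ico (k - m k) k, (f (s k) (p l) / f (p l) (p l)) • p l)
    (hes : ∀ k, e (k + 1) = e k - (f (e k) (p k) / f (p k) (p k)) • p k)
    (k : ℕ) (hk : 1 ≤ k) (hmk : 1 ≤ m k) (α β : ℝ) :
    f (e (k + 1)) (e (k + 1)) ≤
      f (e k - α • s k - β • (e k - e (k - 1))) (e k - α • s k - β • (e k - e (k - 1))) := by
  have fdiv : ∀ u v, f u v / f v v * f v v = f u v := by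
    intro u v
    by_cases h : v = 0
    · simp [h]
    · exact div_mul_cancel₀ _ (fpos v h).ne'
  have fnn : ∀ u, 0 ≤ f u u := by
    intro u
    by_cases h : u = 0
    · simp [h]
    · exact (fpos u h).le
  have hmm : ∀ j d, m (j + d) ≤ m j + d := by
    intro j d
    induction d with
    | zero => simp
    | succ d ih => have := hmsucc (j + d); rw [← add_assoc]; omega
  have hwin : ∀ k j, j ≤ k → m k ≤ m j + (k - j) := by
    intro k j h
    have := hmm j (k - j)
    rwa [Nat.add_sub_cancel' h] at this
  have orth : ∀ k l, k - m k ≤ l → l < k → f (p k) (p l) = 0 := by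
    intro k
    induction k using Nat.strong_induction_on with
    | _ k ih =>
      intro l hl hlk
      rw [hp k]
      simp only [map_sub, map_sum, map_smul, LinearMap.sub_apply, LinearMap.sum_apply,
        LinearMap.smul_apply, smul_eq_mul]
      rw [Finset.sum_eq_single l, fdiv, sub_self]
      · intro j hj hjl
        rw [Finset.mem_Ico] at hj
        have : f (p j) (p l) = 0 := by
          rcases lt_or_gt_of_ne hjl with h | h
          · rw [fsym]
            have := hwin k l hlk.le
            exact ih l hlk j (by omega) h
          · have := hwin k j hj.2.le
            exact ih j hj.2 l (by omega) h
        rw [this, mul_zero]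
      · intro h
        exact absurd (Finset.mem_Ico.2 ⟨hl, hlk⟩) h
  have eorth : ∀ k l, k - m k ≤ l → l ≤ k → f (e (k + 1)) (p l) = 0 := by
    intro k
    induction k with
    | zero =>
      intro l _ h
      obtain rfl : l = 0 := by omega
      rw [hes]
      simp only [map_sub, map_smul, LinearMap.sub_apply, LinearMap.smul_apply, smul_eq_mul]
      rw [fdiv, sub_self]
    | succ k ih =>
      intro l hl hlk
      rw [hes]
      simp only [map_sub, map_smul, LinearMap.sub_apply, LinearMap.smul_apply, smul_eq_mul]
      rcases hlk.eq_or_lt with rfl | h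
      · rw [fdiv, sub_self]
      · have := hmsucc k
        rw [orth (k + 1) l hl h, ih l (by omega) (by omega)]
        simp
  have h1 : f (e (k + 1)) (p k) = 0 := eorth k k (by omega) le_rfl
  have h2 : f (e (k + 1)) (p (k - 1)) = 0 := eorth k (k - 1) (by omega) (by omega)
  have h3 : f (e (k + 1)) (s k) = 0 := by
    have h := h1
    rw [hp k, map_sub, map_sum, Finset.sum_eq_zero, sub_zero] at h
    · exact h
    · intro l hl
      rw [Finset.mem_Ico] at hl
      rw [map_smul, eorth k l hl.1 hl.2.le, smul_zero]
  have hek : e k = e (k - 1) - (f (e (k - 1)) (p (k - 1)) / f (p (k - 1)) (p (k - 1))) • p (k - 1) := by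
    have := hes (k - 1)
    rwa [Nat.sub_add_cancel hk] at this
  have h4 : f (e (k + 1)) (e k - e (k - 1)) = 0 := by
    rw [hek, sub_sub_cancel_left, map_neg, map_smul, h2, smul_zero, neg_zero]
  have h5 : f (e (k + 1)) (e k) = f (e (k + 1)) (e (k + 1)) := by
    conv_rhs => rw [hes k, map_sub, map_smul, ← hes k, h1, smul_zero, sub_zero]
  generalize hy : e k - α • s k - β • (e k - e (k - 1)) = y
  have h6 : f (e (k + 1)) y = f (e (k + 1)) (e (k + 1)) := by
    rw [← hy, map_sub, map_sub, map_smul, map_smul, h3, h4, h5]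
    simp
  have h7 := fnn (y - e (k + 1))
  simp only [map_sub, LinearMap.sub_apply] at h7
  rw [fsym y (e (k + 1)), h6] at h7
  linarith

/-- In the preconditioned method with variable preconditioning, if `k ≥ 1`,
`m k ≥ 1`, and `x l ≠ x*` for all `l ≤ k`, then
`‖e (k+1)‖_A ≤ ‖e k − α • s k − β • (e k − e (k−1))‖_A` for all real `α, β`. -/
theorem pcg_le_heavy_ball_step
    {n : ℕ} (A : Matrix (Fin n) (Fin n) ℝ) (hA : A.PosDef)
    (b x0 : Fin n → ℝ)
    (B : ℕ → Matrix (Fin n) (Fin n) ℝ) (hB : ∀ k, (B k).PosDef)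
    (m : ℕ → ℕ) (hm0 : m 0 = 0) (hmle : ∀ k, m k ≤ k) (hmsucc : ∀ k, m (k + 1) ≤ m k + 1)
    (x r s p e : ℕ → Fin n → ℝ)
    (hx0 : x 0 = x0)
    (hr : ∀ k, r k = b - A *ᵥ x k)
    (hs : ∀ k, s k = (B k)⁻¹ *ᵥ r k)
    (hp : ∀ k, p k = s k - ∑ l ∈ Finset.Ico (k - m k) k,
        (((A *ᵥ s k) ⬝ᵥ p l) / ((A *ᵥ p l) ⬝ᵥ p l)) • p l)
    (hxs : ∀ k, x (k + 1) = x k + ((r k ⬝ᵥ p k) / ((A *ᵥ p k) ⬝ᵥ p k)) • p k)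
    (he : ∀ k, e k = A⁻¹ *ᵥ b - x k)
    (k : ℕ) (hk : 1 ≤ k) (hmk : 1 ≤ m k) (hexact : ∀ l ≤ k, x l ≠ A⁻¹ *ᵥ b) :
    ∀ α β : ℝ, anorm A (e (k + 1)) ≤ anorm A (e k - α • s k - β • (e k - e (k - 1))) := by
  intro α β
  have hdet : IsUnit A.det := (Matrix.isUnit_iff_isUnit_det A).1 hA.isUnit
  have hT : Aᵀ = A := by simpa using hA.isHermitian.eq
  have hre : ∀ k, r k = A *ᵥ e k := by
    intro k
    rw [hr, he, mulVec_sub, mulVec_mulVec, Matrix.mul_nonsing_inv _ hdet, one_mulVec]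
  refine Real.sqrt_le_sqrt ?_
  refine pcg_aux (LinearMap.mk₂ ℝ (fun u v : Fin n → ℝ => (A *ᵥ u) ⬝ᵥ v)
    (by intros; simp [mulVec_add]) (by intros; simp [mulVec_smul])
    (by intros; simp) (by intros; simp)) ?_ ?_ m hmsucc s p e hp ?_ k hk hmk α β
  · intro u v
    simp only [LinearMap.mk₂_apply]
    rw [dotProduct_comm, dotProduct_mulVec, ← mulVec_transpose, hT]
  · intro u hu
    simp only [LinearMap.mk₂_apply]
    rw [dotProduct_comm]
    simpa using hA.dotProduct_mulVec_pos hu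
  · intro k
    simp only [LinearMap.mk₂_apply]
    rw [← hre, he, he, hxs]
    abel
end

section
/- One step of the preconditioned steepest descent method satisfies the classical convergence rate bound: let A and B be n×n real symmetric positive definite matrices such that there exist 0 < a ≤ b with b/a ≤ κmax and a⟨B u, u⟩ ≤ ⟨A u, u⟩ ≤ b⟨B u, u⟩ for all u ∈ ℝⁿ. Let b ∈ ℝⁿ, x* = A⁻¹b, x ∈ ℝⁿ with e = x* − x, s = B⁻¹A e, x' = x + (⟨A e, s⟩/⟨A s, s⟩) s, and e' = x* − x'. Then ‖e'‖_A ≤ ((κmax − 1)/(κmax + 1)) · ‖e‖_A. -/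
open Matrix

theorem sd_symm {n : ℕ} (A : Matrix (Fin n) (Fin n) ℝ) (hA : A.PosDef) (u v : Fin n → ℝ) :
    (A *ᵥ u) ⬝ᵥ v = (A *ᵥ v) ⬝ᵥ u := by
  have h : Aᵀ = A := by simpa using hA.isHermitian.eq
  rw [dotProduct_comm, Matrix.dotProduct_mulVec, ← Matrix.mulVec_transpose, h]

/-- One step of the preconditioned steepest descent method satisfies the
classical convergence rate bound `‖e'‖_A ≤ ((κmax − 1)/(κmax + 1)) ‖e‖_A`, assuming
`a ⟨B u, u⟩ ≤ ⟨A u, u⟩ ≤ c ⟨B u, u⟩` for all `u`, with `0 < a ≤ c` and `c/a ≤ κmax`. -/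
theorem sd_convergence_bound
    {n : ℕ} (A B : Matrix (Fin n) (Fin n) ℝ) (hA : A.PosDef) (hB : B.PosDef)
    (κmax a c : ℝ) (ha : 0 < a) (hac : a ≤ c) (hκ : c / a ≤ κmax)
    (hlow : ∀ u : Fin n → ℝ, a * ((B *ᵥ u) ⬝ᵥ u) ≤ (A *ᵥ u) ⬝ᵥ u)
    (hup : ∀ u : Fin n → ℝ, (A *ᵥ u) ⬝ᵥ u ≤ c * ((B *ᵥ u) ⬝ᵥ u))
    (b x : Fin n → ℝ)
    (e : Fin n → ℝ) (he : e = A⁻¹ *ᵥ b - x)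
    (s : Fin n → ℝ) (hs : s = B⁻¹ *ᵥ (A *ᵥ e))
    (x' : Fin n → ℝ) (hx' : x' = x + (((A *ᵥ e) ⬝ᵥ s) / ((A *ᵥ s) ⬝ᵥ s)) • s)
    (e' : Fin n → ℝ) (he' : e' = A⁻¹ *ᵥ b - x') :
    anorm A e' ≤ ((κmax - 1) / (κmax + 1)) * anorm A e := by
  have hAs : ∀ u v : Fin n → ℝ, (A *ᵥ u) ⬝ᵥ v = (A *ᵥ v) ⬝ᵥ u :=
    fun u v => sd_symm A hA u v
  have hBs : ∀ u v : Fin n → ℝ, (B *ᵥ u) ⬝ᵥ v = (B *ᵥ v) ⬝ᵥ u :=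
    fun u v => sd_symm B hB u v
  have hBu : IsUnit B.det := (Matrix.isUnit_iff_isUnit_det B).1 hB.isUnit
  have hBsA : B *ᵥ s = A *ᵥ e := by
    rw [hs, Matrix.mulVec_mulVec, Matrix.mul_nonsing_inv B hBu, Matrix.one_mulVec]
  have hnn : ∀ u : Fin n → ℝ, 0 ≤ (A *ᵥ u) ⬝ᵥ u := fun u => by
    have := hA.posSemidef.dotProduct_mulVec_nonneg u
    rw [dotProduct_comm]
    simpa using this
  have qA : ∀ α β : ℝ, (A *ᵥ (α • e + β • s)) ⬝ᵥ (α • e + β • s)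
      = α^2 * ((A *ᵥ e) ⬝ᵥ e) + 2*α*β * ((A *ᵥ e) ⬝ᵥ s) + β^2 * ((A *ᵥ s) ⬝ᵥ s) := by
    intro α β
    simp only [Matrix.mulVec_add, Matrix.mulVec_smul, dotProduct_add, add_dotProduct,
      smul_dotProduct, dotProduct_smul, smul_eq_mul, hAs s e]
    ring
  have qB : ∀ α β : ℝ, (B *ᵥ (α • e + β • s)) ⬝ᵥ (α • e + β • s)
      = α^2 * ((B *ᵥ e) ⬝ᵥ e) + 2*α*β * ((A *ᵥ e) ⬝ᵥ e) + β^2 * ((A *ᵥ e) ⬝ᵥ s) := by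
    intro α β
    simp only [Matrix.mulVec_add, Matrix.mulVec_smul, dotProduct_add, add_dotProduct,
      smul_dotProduct, dotProduct_smul, smul_eq_mul, hBs e s, hBsA]
    ring
  have hee : e' = (1:ℝ) • e + (-(((A *ᵥ e) ⬝ᵥ s) / ((A *ᵥ s) ⬝ᵥ s))) • s := by
    rw [he', hx', he, one_smul, neg_smul]; abel
  have hE' := qA 1 (-(((A *ᵥ e) ⬝ᵥ s) / ((A *ᵥ s) ⬝ᵥ s)))
  rw [← hee] at hE'
  have L : ∀ α β : ℝ, _ := fun α β => hlow (α • e + β • s)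
  have U : ∀ α β : ℝ, _ := fun α β => hup (α • e + β • s)
  simp only [qA, qB] at L U
  have hE := hnn e
  have hq := hnn s
  unfold anorm
  generalize (A *ᵥ e') ⬝ᵥ e' = E' at *
  generalize (A *ᵥ e) ⬝ᵥ e = E at *
  generalize (A *ᵥ e) ⬝ᵥ s = p at *
  generalize (A *ᵥ s) ⬝ᵥ s = q at *
  generalize (B *ᵥ e) ⬝ᵥ e = r at *
  have hc : 0 < c := lt_of_lt_of_le ha hac
  have key : q + a*c*E ≤ (a+c)*p := by
    rcases hac.eq_or_lt with h | h
    · subst h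
      have h1 := L 1 0
      have h2 := U 1 0
      have h3 := L 0 1
      have h4 := U 0 1
      have h5 := L 1 1
      have h6 := U 1 1
      have e1 : E = a * r := by linarith
      have e2 : q = a * p := by linarith
      have e3 : p = a * E := by linarith
      rw [e2, e3]; linarith
    · have h1 := mul_le_mul_of_nonneg_left (U (-a) 1) hc.le
      have h2 := mul_le_mul_of_nonneg_left (L c (-1)) ha.le
      have h3 : 0 ≤ (c - a) * ((a+c)*p - q - a*c*E) := by linarith
      have := nonneg_of_mul_nonneg_right h3 (sub_pos.2 h)
      linarith
  have hκ' : c ≤ κmax * a := (div_le_iff₀ ha).1 hκ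
  have hκ1 : 1 ≤ κmax := le_trans ((one_le_div ha).2 hac) hκ
  have hρ : 0 ≤ (κmax - 1) / (κmax + 1) := div_nonneg (by linarith) (by linarith)
  have hp : q = 0 → E = 0 := by
    intro h0
    have h3 := L 0 1
    have h4 : p ≤ 0 := by
      by_contra hcon
      push Not at hcon
      have := mul_pos ha hcon
      linarith
    have h5 : (a+c)*p ≤ 0 := mul_nonpos_of_nonneg_of_nonpos (by linarith) h4
    have h6 : 0 < a*c := mul_pos ha hc
    by_contra hcon
    have := mul_pos h6 (lt_of_le_of_ne hE (Ne.symm hcon))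
    linarith
  have main : E' ≤ ((κmax - 1) / (κmax + 1))^2 * E := by
    rcases hq.eq_or_lt with h | h
    · have := hp h.symm
      rw [hE', this, ← h]; simp
    · have hk : κmax * (a+c)^2 ≤ (κmax+1)^2 * (a*c) := by
        have h1 : 0 ≤ κmax * a - c := by linarith
        have h2 : 0 ≤ κmax * c - a := by nlinarith
        nlinarith [mul_nonneg h1 h2]
      have h1 : 4*(a*c)*(E*q) ≤ ((a+c)*p)^2 := by
        have h0 : 0 ≤ q + a*c*E := by positivity
        have := pow_le_pow_left₀ h0 key 2
        nlinarith [sq_nonneg (q - a*c*E)]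
      have h2 : 4*κmax*(E*q) ≤ (κmax+1)^2 * p^2 := by
        have hs2 : 0 < (a+c)^2 := by positivity
        refine le_of_mul_le_mul_right ?_ hs2
        have e1 := mul_le_mul_of_nonneg_right hk (mul_nonneg hE hq)
        have e2 := mul_le_mul_of_nonneg_left h1 (sq_nonneg (κmax+1))
        linarith
      have h3 : E' = E - p^2/q := by
        rw [hE']; field_simp; ring
      have hk1 : 0 < κmax + 1 := by linarith
      have h4 : 4*κmax*E/(κmax+1)^2 ≤ p^2/q := by
        rw [div_le_div_iff₀ (by positivity) h]; linarith
      have h5 : ((κmax - 1) / (κmax + 1))^2 * E = E - 4*κmax*E/(κmax+1)^2 := by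
        field_simp; ring
      rw [h3, h5]; linarith
  calc Real.sqrt E' ≤ Real.sqrt (((κmax - 1) / (κmax + 1))^2 * E) := Real.sqrt_le_sqrt main
    _ = _ := by rw [Real.sqrt_mul (sq_nonneg _), Real.sqrt_sq hρ]
end

section
/- In the preconditioned method with variable preconditioning, assume each preconditioner satisfies κ(B_k⁻¹A) ≤ κmax, i.e., there exist 0 < a_k ≤ b_k with b_k/a_k ≤ κmax and a_k⟨B_k u, u⟩ ≤ ⟨A u, u⟩ ≤ b_k⟨B_k u, u⟩ for all u ∈ ℝⁿ. If x_l ≠ x* for all l ≤ k, then ‖e_{k+1}‖_A ≤ ((κmax − 1)/(κmax + 1)) · ‖e_k‖_A. -/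
open Matrix

lemma aux_symm {n : ℕ} {A : Matrix (Fin n) (Fin n) ℝ} (hA : A.PosDef) (u v : Fin n → ℝ) :
    (A *ᵥ u) ⬝ᵥ v = (A *ᵥ v) ⬝ᵥ u := by
  have h : Aᵀ = A := by
    have := hA.isHermitian
    rwa [Matrix.IsHermitian, Matrix.conjTranspose_eq_transpose_of_trivial] at this
  rw [dotProduct_comm (A *ᵥ v) u, dotProduct_mulVec, ← mulVec_transpose, h]

lemma aux_nonneg {n : ℕ} {A : Matrix (Fin n) (Fin n) ℝ} (hA : A.PosDef) (u : Fin n → ℝ) :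
    0 ≤ (A *ᵥ u) ⬝ᵥ u := by
  have := hA.posSemidef.dotProduct_mulVec_nonneg u
  rw [dotProduct_comm]
  simpa using this

lemma aux_pos {n : ℕ} {A : Matrix (Fin n) (Fin n) ℝ} (hA : A.PosDef) (u : Fin n → ℝ)
    (hu : u ≠ 0) : 0 < (A *ᵥ u) ⬝ᵥ u := by
  have := hA.dotProduct_mulVec_pos hu
  rw [dotProduct_comm]
  simpa using this

lemma aux_key {n : ℕ} {A B : Matrix (Fin n) (Fin n) ℝ} (hA : A.PosDef) (hB : B.PosDef)
    (a c : ℝ) (ha : 0 < a) (hac : a ≤ c)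
    (h1 : ∀ u : Fin n → ℝ, a * ((B *ᵥ u) ⬝ᵥ u) ≤ (A *ᵥ u) ⬝ᵥ u)
    (h2 : ∀ u : Fin n → ℝ, (A *ᵥ u) ⬝ᵥ u ≤ c * ((B *ᵥ u) ⬝ᵥ u))
    (e s : Fin n → ℝ) (hs : B *ᵥ s = A *ᵥ e) :
    0 ≤ (a + c) * ((A *ᵥ e) ⬝ᵥ s) - a * c * ((A *ᵥ e) ⬝ᵥ e) - (A *ᵥ s) ⬝ᵥ s := by
  have e1 : (B *ᵥ s) ⬝ᵥ s = (A *ᵥ e) ⬝ᵥ s := by rw [hs]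
  have e2 : (B *ᵥ s) ⬝ᵥ e = (A *ᵥ e) ⬝ᵥ e := by rw [hs]
  have e3 := aux_symm hA s e
  have e4 := aux_symm hB s e
  rcases hac.eq_or_lt with h | h
  · subst h
    have q1 := h1 (s - a • e)
    have q2 := h2 (s - a • e)
    have q3 := h1 (s + a • e)
    have q4 := h2 (s + a • e)
    have q5 := h1 e
    have q6 := h2 e
    have q7 := h1 s
    have q8 := h2 s
    simp only [mulVec_add, mulVec_sub, mulVec_smul, add_dotProduct, sub_dotProduct,
      dotProduct_add, dotProduct_sub, smul_dotProduct, dotProduct_smul, smul_eq_mul] at q1 q2 q3 q4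
    rw [e1] at q1 q2 q3 q4 q7 q8
    rw [e2] at q1 q2 q3 q4 e4
    rw [← e4] at q1 q2 q3 q4
    rw [e3] at q1 q2 q3 q4
    have f1 : (A *ᵥ e) ⬝ᵥ e = a * ((B *ᵥ e) ⬝ᵥ e) := le_antisymm q6 q5
    have f2 : (A *ᵥ s) ⬝ᵥ s = a * ((A *ᵥ e) ⬝ᵥ s) := le_antisymm q8 q7
    rw [f2] at q1 q2 q3 q4 ⊢
    have f3 : (B *ᵥ e) ⬝ᵥ e = ((A *ᵥ e) ⬝ᵥ e) / a := by rw [f1]; field_simp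
    rw [f3] at q1 q2 q3 q4
    field_simp at q1 q2 q3 q4
    nlinarith
  · have m1 := h2 (s - a • e)
    have m2 := h1 (c • e - s)
    simp only [mulVec_add, mulVec_sub, mulVec_smul, add_dotProduct, sub_dotProduct,
      dotProduct_add, dotProduct_sub, smul_dotProduct, dotProduct_smul, smul_eq_mul] at m1 m2
    rw [e1, e2, ← e4, e2, e3] at m1 m2
    have hc : 0 < c := ha.trans h
    have m3 := mul_le_mul_of_nonneg_left m1 hc.le
    have m4 := mul_le_mul_of_nonneg_left m2 ha.le
    have : 0 ≤ (c - a) * ((a + c) * ((A *ᵥ e) ⬝ᵥ s) - a * c * ((A *ᵥ e) ⬝ᵥ e) - (A *ᵥ s) ⬝ᵥ s) := by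
      linarith
    exact nonneg_of_mul_nonneg_right this (sub_pos.2 h)

/-- Convergence rate bound for the preconditioned method with variable
preconditioning: if each preconditioner satisfies `κ(B_k⁻¹ A) ≤ κmax` (in the sense that
there are `0 < a_k ≤ b_k` with `b_k/a_k ≤ κmax` and
`a_k ⟨B_k u, u⟩ ≤ ⟨A u, u⟩ ≤ b_k ⟨B_k u, u⟩` for all `u`), and `x l ≠ x*` for all `l ≤ k`,
then `‖e (k+1)‖_A ≤ ((κmax − 1)/(κmax + 1)) ‖e k‖_A`. -/
theorem pcg_convergence_bound
    {n : ℕ} (A : Matrix (Fin n) (Fin n) ℝ) (hA : A.PosDef)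
    (b x0 : Fin n → ℝ)
    (B : ℕ → Matrix (Fin n) (Fin n) ℝ) (hB : ∀ k, (B k).PosDef)
    (κmax : ℝ)
    (hcond : ∀ k, ∃ a c : ℝ, 0 < a ∧ a ≤ c ∧ c / a ≤ κmax ∧
      (∀ u : Fin n → ℝ, a * ((B k *ᵥ u) ⬝ᵥ u) ≤ (A *ᵥ u) ⬝ᵥ u) ∧
      (∀ u : Fin n → ℝ, (A *ᵥ u) ⬝ᵥ u ≤ c * ((B k *ᵥ u) ⬝ᵥ u)))
    (m : ℕ → ℕ) (hm0 : m 0 = 0) (hmle : ∀ k, m k ≤ k) (hmsucc : ∀ k, m (k + 1) ≤ m k + 1)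
    (x r s p e : ℕ → Fin n → ℝ)
    (hx0 : x 0 = x0)
    (hr : ∀ k, r k = b - A *ᵥ x k)
    (hs : ∀ k, s k = (B k)⁻¹ *ᵥ r k)
    (hp : ∀ k, p k = s k - ∑ l ∈ Finset.Ico (k - m k) k,
        (((A *ᵥ s k) ⬝ᵥ p l) / ((A *ᵥ p l) ⬝ᵥ p l)) • p l)
    (hxs : ∀ k, x (k + 1) = x k + ((r k ⬝ᵥ p k) / ((A *ᵥ p k) ⬝ᵥ p k)) • p k)
    (he : ∀ k, e k = A⁻¹ *ᵥ b - x k)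
    (k : ℕ) (hexact : ∀ l ≤ k, x l ≠ A⁻¹ *ᵥ b) :
    anorm A (e (k + 1)) ≤ ((κmax - 1) / (κmax + 1)) * anorm A (e k) := by
  have hAdet : IsUnit A.det := hA.det_pos.ne'.isUnit
  have hre : ∀ k, r k = A *ᵥ e k := by
    intro k
    rw [hr, he, mulVec_sub, mulVec_mulVec, Matrix.mul_nonsing_inv _ hAdet, one_mulVec]
  have hBs : ∀ k, B k *ᵥ s k = A *ᵥ e k := by
    intro k
    rw [hs, mulVec_mulVec, Matrix.mul_nonsing_inv _ (hB k).det_pos.ne'.isUnit, one_mulVec, hre]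
  set α : ℕ → ℝ := fun k => (r k ⬝ᵥ p k) / ((A *ᵥ p k) ⬝ᵥ p k) with hα
  have hes : ∀ k, e (k + 1) = e k - α k • p k := by
    intro k
    rw [he, hxs, he]
    simp only [hα]
    abel
  have hdiv : ∀ (w : ℝ) (v : Fin n → ℝ), (v = 0 → w = 0) →
      w / ((A *ᵥ v) ⬝ᵥ v) * ((A *ᵥ v) ⬝ᵥ v) = w := by
    intro w v hv
    by_cases h : v = 0
    · rw [hv h]; simp
    · exact div_mul_cancel₀ _ (aux_pos hA v h).ne'
  have P : ∀ k, (∀ l ∈ Finset.Ico (k - m k) k, (A *ᵥ e k) ⬝ᵥ p l = 0) ∧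
      (∀ i ∈ Finset.Ico (k - m k) k, ∀ j ∈ Finset.Ico (k - m k) k, i ≠ j →
        (A *ᵥ p i) ⬝ᵥ p j = 0) →
      (∀ l ∈ Finset.Ico (k - m k) k, (A *ᵥ p k) ⬝ᵥ p l = 0) ∧
      (∀ l ∈ Finset.Ico (k - m k) (k + 1), (A *ᵥ e (k + 1)) ⬝ᵥ p l = 0) := by
    rintro k ⟨h1, h2⟩
    have h3 : ∀ l ∈ Finset.Ico (k - m k) k, (A *ᵥ p k) ⬝ᵥ p l = 0 := by
      intro l hl
      rw [hp k, mulVec_sub, sub_dotProduct, aux_symm hA (∑ l ∈ _, _), dotProduct_sum,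
        Finset.sum_eq_single l]
      · rw [dotProduct_smul, smul_eq_mul, hdiv, sub_self]
        intro h; simp [h]
      · intro j hj hjl
        rw [dotProduct_smul, h2 l hl j hj hjl.symm, smul_zero]
      · intro h; exact absurd hl h
    refine ⟨h3, ?_⟩
    intro l hl
    rw [hes, mulVec_sub, sub_dotProduct, mulVec_smul, smul_dotProduct, smul_eq_mul]
    by_cases hlk : l = k
    · subst hlk
      simp only [hα]
      rw [hdiv, hre, sub_self]
      intro h; simp [h]
    · have hl' : l ∈ Finset.Ico (k - m k) k := by
        rw [Finset.mem_Ico] at hl ⊢; omega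
      rw [h1 l hl', h3 l hl']; simp
  have Q : ∀ k, (∀ l ∈ Finset.Ico (k - m k) k, (A *ᵥ e k) ⬝ᵥ p l = 0) ∧
      (∀ i ∈ Finset.Ico (k - m k) k, ∀ j ∈ Finset.Ico (k - m k) k, i ≠ j →
        (A *ᵥ p i) ⬝ᵥ p j = 0) := by
    intro k
    induction k with
    | zero => simp
    | succ k ih =>
      obtain ⟨h3, h4⟩ := P k ih
      have hsub : ∀ l ∈ Finset.Ico (k + 1 - m (k + 1)) (k + 1),
          l ∈ Finset.Ico (k - m k) (k + 1) := by
        intro l hl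
        have := hmsucc k
        rw [Finset.mem_Ico] at hl ⊢; omega
      refine ⟨fun l hl => h4 l (hsub l hl), ?_⟩
      intro i hi j hj hij
      have hi := hsub i hi
      have hj := hsub j hj
      rw [Finset.mem_Ico] at hi hj
      by_cases hik : i = k
      · subst hik
        exact h3 j (by rw [Finset.mem_Ico]; omega)
      · by_cases hjk : j = k
        · subst hjk
          rw [aux_symm hA]
          exact h3 i (by rw [Finset.mem_Ico]; omega)
        · exact ih.2 i (by rw [Finset.mem_Ico]; omega) j (by rw [Finset.mem_Ico]; omega) hij
  obtain ⟨-, h4⟩ := P k (Q k)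
  have hmk := hmle k
  have hep : (A *ᵥ e (k + 1)) ⬝ᵥ p k = 0 := h4 k (by rw [Finset.mem_Ico]; omega)
  have hesk : (A *ᵥ e (k + 1)) ⬝ᵥ s k = 0 := by
    have : s k = p k + ∑ l ∈ Finset.Ico (k - m k) k,
        (((A *ᵥ s k) ⬝ᵥ p l) / ((A *ᵥ p l) ⬝ᵥ p l)) • p l := by rw [hp k]; abel
    rw [this, dotProduct_add, hep, dotProduct_sum, zero_add]
    apply Finset.sum_eq_zero
    intro l hl
    rw [dotProduct_smul, h4 l (by rw [Finset.mem_Ico] at hl ⊢; omega), smul_zero]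
  obtain ⟨a, c, ha, hac, hκ, b1, b2⟩ := hcond k
  have key := aux_key hA (hB k) a c ha hac b1 b2 (e k) (s k) (hBs k)
  have hc : 0 < c := ha.trans_le hac
  set t : ℝ := 2 / (a + c) with ht
  have hmin : (A *ᵥ e (k + 1)) ⬝ᵥ e (k + 1) ≤
      (A *ᵥ e k) ⬝ᵥ e k - 2 * t * ((A *ᵥ e k) ⬝ᵥ s k) + t ^ 2 * ((A *ᵥ s k) ⬝ᵥ s k) := by
    have hek : e k = e (k + 1) + α k • p k := by rw [hes]; abel
    have n1 := aux_nonneg hA (α k • p k - t • s k)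
    have z1 := aux_symm hA (s k) (e (k + 1))
    have z2 := aux_symm hA (p k) (e (k + 1))
    have z3 := aux_symm hA (s k) (p k)
    rw [hesk] at z1
    rw [hep] at z2
    rw [hek]
    simp only [mulVec_add, mulVec_sub, mulVec_smul, add_dotProduct, sub_dotProduct,
      dotProduct_add, dotProduct_sub, smul_dotProduct, dotProduct_smul, smul_eq_mul,
      hesk, hep, z1, z2, z3] at n1 ⊢
    nlinarith
  have hE := aux_nonneg hA (e k)
  have hrate : (A *ᵥ e (k + 1)) ⬝ᵥ e (k + 1) ≤ ((c - a) / (c + a)) ^ 2 * ((A *ᵥ e k) ⬝ᵥ e k) := by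
    refine hmin.trans ?_
    have hk2 := mul_nonneg (sq_nonneg t) key
    have ht1 : t * (a + c) = 2 := by rw [ht]; field_simp
    have hr1 : ((c - a) / (c + a)) ^ 2 = 1 - t ^ 2 * (a * c) := by
      rw [ht]; field_simp; ring
    rw [hr1]
    have : t ^ 2 * ((a + c) * ((A *ᵥ e k) ⬝ᵥ s k)) = 2 * t * ((A *ᵥ e k) ⬝ᵥ s k) := by
      rw [← ht1]; ring
    linarith
  have hρ : 0 ≤ (c - a) / (c + a) := div_nonneg (sub_nonneg.2 hac) (by positivity)
  have hκ' : c ≤ κmax * a := (div_le_iff₀ ha).1 hκ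
  have hκ1 : 1 ≤ κmax := le_trans ((one_le_div ha).2 hac) hκ
  have hle : (c - a) / (c + a) ≤ (κmax - 1) / (κmax + 1) := by
    rw [div_le_div_iff₀ (by positivity) (by linarith)]
    nlinarith
  unfold anorm
  calc _ ≤ Real.sqrt (((c - a) / (c + a)) ^ 2 * ((A *ᵥ e k) ⬝ᵥ e k)) := Real.sqrt_le_sqrt hrate
    _ = (c - a) / (c + a) * Real.sqrt ((A *ᵥ e k) ⬝ᵥ e k) := by
      rw [Real.sqrt_mul (sq_nonneg _), Real.sqrt_sq hρ]
    _ ≤ _ := mul_le_mul_of_nonneg_right hle (Real.sqrt_nonneg _)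
end

section
/- The convergence rate bound for the method with variable preconditioning is sharp: let A be an n×n real symmetric positive definite matrix, b ∈ ℝⁿ, x₀ ∈ ℝⁿ with x₀ ≠ x* = A⁻¹b, let κmax > 1, and let K be a number of iterations with K < n. Then there exist real symmetric positive definite matrices B₀, …, B_{K−1}, each satisfying κ(B_k⁻¹A) ≤ κmax (i.e., there exist 0 < a_k ≤ b_k with b_k/a_k ≤ κmax and a_k⟨B_k u, u⟩ ≤ ⟨A u, u⟩ ≤ b_k⟨B_k u, u⟩ for all u), such that for every admissible choice of the integers m_k (0 ≤ m_k ≤ k, m_{k+1} ≤ m_k + 1) the method produces p_k = s_k for every k < K (i.e., it turns into the preconditioned steepest descent method) and ‖e_{k+1}‖_A / ‖e_k‖_A = (κmax − 1)/(κmax + 1) for every k < K. -/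
open Matrix

noncomputable def aip {n : ℕ} (A : Matrix (Fin n) (Fin n) ℝ) : (Fin n → ℝ) →ₗ[ℝ] (Fin n → ℝ) →ₗ[ℝ] ℝ :=
  LinearMap.mk₂ ℝ (fun x y => (A *ᵥ x) ⬝ᵥ y)
    (by intros; simp [mulVec_add, add_dotProduct])
    (by intros; simp [mulVec_smul, smul_dotProduct])
    (by intros; simp [dotProduct_add])
    (by intros; simp [dotProduct_smul])

lemma aip_def {n : ℕ} (A : Matrix (Fin n) (Fin n) ℝ) (x y : Fin n → ℝ) :
    (A *ᵥ x) ⬝ᵥ y = aip A x y := rfl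

lemma aip_symm {n : ℕ} {A : Matrix (Fin n) (Fin n) ℝ} (hA : A.PosDef) (x y : Fin n → ℝ) :
    aip A x y = aip A y x := by
  rw [← aip_def, ← aip_def]
  have h : Aᵀ = A := by
    have := hA.isHermitian.eq
    rwa [conjTranspose_eq_transpose_of_trivial] at this
  rw [dotProduct_comm, dotProduct_mulVec, ← mulVec_transpose, h]

lemma aip_pos {n : ℕ} {A : Matrix (Fin n) (Fin n) ℝ} (hA : A.PosDef) {x : Fin n → ℝ}
    (hx : x ≠ 0) : 0 < aip A x x := by
  rw [← aip_def, dotProduct_comm]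
  simpa using hA.dotProduct_mulVec_pos hx

lemma aip_nonneg {n : ℕ} {A : Matrix (Fin n) (Fin n) ℝ} (hA : A.PosDef) (x : Fin n → ℝ) :
    0 ≤ aip A x x := by
  by_cases h : x = 0
  · simp [h]
  · exact (aip_pos hA h).le

lemma aip_cs {n : ℕ} {A : Matrix (Fin n) (Fin n) ℝ} (hA : A.PosDef) (g u : Fin n → ℝ) :
    (aip A g u) ^ 2 ≤ aip A g g * aip A u u := by
  by_cases h : g = 0
  · simp [h]
  have hg := aip_pos hA h
  have h1 := aip_nonneg hA (aip A g g • u - aip A g u • g)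
  simp only [map_sub, map_smul, LinearMap.sub_apply, LinearMap.smul_apply, smul_eq_mul,
    aip_symm hA u g] at h1
  have h2 : 0 ≤ aip A g g * (aip A g g * aip A u u - (aip A g u) ^ 2) := by nlinarith
  have := nonneg_of_mul_nonneg_right h2 hg
  linarith

lemma exists_seq {n : ℕ} {A : Matrix (Fin n) (Fin n) ℝ} (hA : A.PosDef) (e0 : Fin n → ℝ)
    (q : ℝ) (hq0 : 0 < q) (hq1 : q < 1) (K : ℕ) (hK : K < n) :
    ∃ E : ℕ → Fin n → ℝ, E 0 = e0 ∧
      ∀ k ≤ K, ∀ l ≤ k, aip A (E k) (E l) = q ^ (2 * k) * aip A e0 e0 := by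
  induction K with
  | zero =>
    refine ⟨fun _ => e0, rfl, ?_⟩
    intro k hk l hl
    obtain rfl : k = 0 := by omega
    simp
  | succ K ih =>
    obtain ⟨E, hE0, hE⟩ := ih (by omega)
    obtain ⟨d, hd, hd0⟩ : ∃ d : Fin n → ℝ, (∀ l ≤ K, aip A d (E l) = 0) ∧ d ≠ 0 := by
      let f : (Fin n → ℝ) →ₗ[ℝ] (Fin (K + 1) → ℝ) :=
        LinearMap.pi fun i => (aip A).flip (E i)
      have hf : LinearMap.ker f ≠ ⊥ := LinearMap.ker_ne_bot_of_finrank_lt (by simpa using hK)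
      obtain ⟨d, hd, hd0⟩ := (Submodule.ne_bot_iff _).1 hf
      refine ⟨d, fun l hl => ?_, hd0⟩
      have := congrFun (LinearMap.mem_ker.1 hd) ⟨l, by omega⟩
      simpa [f] using this
    have hdp := aip_pos hA hd0
    have hN := aip_nonneg hA e0
    obtain ⟨t, ht⟩ : ∃ t : ℝ, t ^ 2 * aip A d d =
        q ^ (2 * K + 2) * (1 - q ^ 2) * aip A e0 e0 := by
      refine ⟨Real.sqrt (q ^ (2 * K + 2) * (1 - q ^ 2) * aip A e0 e0 / aip A d d), ?_⟩
      rw [Real.sq_sqrt, div_mul_cancel₀ _ hdp.ne']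
      have : 0 ≤ 1 - q ^ 2 := by nlinarith
      positivity
    refine ⟨fun k => if k ≤ K then E k else (q ^ 2 • E K + t • d), by simp [hE0], ?_⟩
    intro k hk l hl
    by_cases hkK : k ≤ K
    · have : l ≤ K := by omega
      simp only [hkK, this, if_true]
      exact hE k hkK l hl
    · obtain rfl : k = K + 1 := by omega
      by_cases hlK : l ≤ K
      · simp only [hkK, hlK, if_true, if_false, map_add, map_smul, LinearMap.add_apply,
          LinearMap.smul_apply, smul_eq_mul, hd l hlK, hE K le_rfl l hlK]
        ring
      · simp only [hkK, hlK, if_false, map_add, map_smul, LinearMap.add_apply,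
          LinearMap.smul_apply, smul_eq_mul, aip_symm hA (E K) d, hd K le_rfl,
          hE K le_rfl K le_rfl]
        linear_combination ht

lemma vmv_mulVec {n : ℕ} (g u : Fin n → ℝ) :
    vecMulVec g g *ᵥ u = (g ⬝ᵥ u) • g := by
  ext i
  simp [vecMulVec_mulVec, mul_comm]

/-- The convergence rate bound for the method with variable
preconditioning is sharp: for any SPD `A`, `b`, `x 0 ≠ x* = A⁻¹ b`, `κmax > 1`, and number
of iterations `K < n`, there exist SPD preconditioners `B 0, …, B (K−1)`, each with
`κ(B_k⁻¹ A) ≤ κmax`, such that for every admissible choice of `m` the method turns into the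
preconditioned steepest descent method (`p k = s k`) and
`‖e (k+1)‖_A / ‖e k‖_A = (κmax − 1)/(κmax + 1)` for every `k < K`. -/
theorem pcg_bound_sharp
    {n : ℕ} (A : Matrix (Fin n) (Fin n) ℝ) (hA : A.PosDef)
    (b x0 : Fin n → ℝ) (hx0 : x0 ≠ A⁻¹ *ᵥ b)
    (κmax : ℝ) (hκ : 1 < κmax) (K : ℕ) (hK : K < n) :
    ∃ B : ℕ → Matrix (Fin n) (Fin n) ℝ,
      (∀ k, (B k).PosDef) ∧
      (∀ k < K, ∃ a c : ℝ, 0 < a ∧ a ≤ c ∧ c / a ≤ κmax ∧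
        (∀ u : Fin n → ℝ, a * ((B k *ᵥ u) ⬝ᵥ u) ≤ (A *ᵥ u) ⬝ᵥ u) ∧
        (∀ u : Fin n → ℝ, (A *ᵥ u) ⬝ᵥ u ≤ c * ((B k *ᵥ u) ⬝ᵥ u))) ∧
      ∀ m : ℕ → ℕ, m 0 = 0 → (∀ k, m k ≤ k) → (∀ k, m (k + 1) ≤ m k + 1) →
      ∀ x r s p e : ℕ → Fin n → ℝ,
        x 0 = x0 →
        (∀ k, r k = b - A *ᵥ x k) →
        (∀ k, s k = (B k)⁻¹ *ᵥ r k) →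
        (∀ k, p k = s k - ∑ l ∈ Finset.Ico (k - m k) k,
            (((A *ᵥ s k) ⬝ᵥ p l) / ((A *ᵥ p l) ⬝ᵥ p l)) • p l) →
        (∀ k, x (k + 1) = x k + ((r k ⬝ᵥ p k) / ((A *ᵥ p k) ⬝ᵥ p k)) • p k) →
        (∀ k, e k = A⁻¹ *ᵥ b - x k) →
        ∀ k < K, p k = s k ∧
          anorm A (e (k + 1)) / anorm A (e k) = (κmax - 1) / (κmax + 1) := by
  obtain ⟨q, hq⟩ : ∃ q : ℝ, q = (κmax - 1) / (κmax + 1) := ⟨_, rfl⟩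
  have hq0 : 0 < q := by rw [hq]; apply div_pos <;> linarith
  have hq1 : q < 1 := by rw [hq, div_lt_one] <;> linarith
  have hqκ : (1 + q) / (1 - q) = κmax := by
    have : κmax + 1 ≠ 0 := by linarith
    rw [div_eq_iff (by linarith), hq]
    field_simp
    ring
  rw [← hq]
  have hq2 : 0 < 1 - q ^ 2 := by nlinarith
  obtain ⟨e0, he0⟩ : ∃ e0, e0 = A⁻¹ *ᵥ b - x0 := ⟨_, rfl⟩
  have he0n : e0 ≠ 0 := by rw [he0]; exact sub_ne_zero.2 (Ne.symm hx0)
  have hN := aip_pos hA he0n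
  obtain ⟨E, hE0, hE⟩ := exists_seq hA e0 q hq0 hq1 K hK
  set N := aip A e0 e0 with hNdef
  have hD : ∀ k, 0 < q ^ (2 * k) * N := fun k => by positivity
  have hkk : ∀ k < K, aip A (E k) (E k) = q ^ (2 * k) * N := fun k hk => hE k hk.le k le_rfl
  have hk1k : ∀ k < K, aip A (E (k+1)) (E k) = q ^ 2 * (q ^ (2 * k) * N) := fun k hk => by
    rw [hE (k+1) hk k (by omega)]; ring
  have hkk1 : ∀ k < K, aip A (E k) (E (k+1)) = q ^ 2 * (q ^ (2 * k) * N) := fun k hk => by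
    rw [aip_symm hA, hk1k k hk]
  have hk1 : ∀ k < K, aip A (E (k+1)) (E (k+1)) = q ^ 2 * (q ^ (2 * k) * N) := fun k hk => by
    rw [hE (k+1) hk (k+1) le_rfl]; ring
  let g : ℕ → Fin n → ℝ := fun k => E k + q⁻¹ • E (k + 1)
  let β : ℕ → ℝ := fun k => q / ((1 + q) * (1 - q ^ 2) * (q ^ (2 * k) * N))
  have hβ : ∀ k, 0 < β k := fun k => by
    have := hD k
    simp only [β]; positivity
  let B : ℕ → Matrix (Fin n) (Fin n) ℝ := fun k =>
    (1 + q)⁻¹ • A + β k • vecMulVec (A *ᵥ g k) (A *ᵥ g k)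
  have hBv : ∀ k u, B k *ᵥ u = (1 + q)⁻¹ • (A *ᵥ u) + (β k * aip A (g k) u) • (A *ᵥ g k) := by
    intro k u
    simp only [B, add_mulVec, smul_mulVec, vmv_mulVec, aip_def, smul_smul]
  have hBq : ∀ k u, (B k *ᵥ u) ⬝ᵥ u = (1 + q)⁻¹ * aip A u u + β k * (aip A (g k) u) ^ 2 := by
    intro k u
    rw [hBv, add_dotProduct, smul_dotProduct, smul_dotProduct, aip_def, aip_def]
    simp only [smul_eq_mul]
    ring
  have hBpd : ∀ k, (B k).PosDef := by
    intro k
    refine Matrix.PosDef.of_dotProduct_mulVec_pos ?_ ?_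
    · have h : Aᵀ = A := by
        have := hA.isHermitian.eq
        rwa [conjTranspose_eq_transpose_of_trivial] at this
      simp [B, Matrix.IsHermitian, conjTranspose_eq_transpose_of_trivial, transpose_vecMulVec, h]
    · intro u hu
      simp only [star_trivial]
      rw [dotProduct_comm, hBq]
      have := aip_pos hA hu
      have := hβ k
      positivity
  have hg : ∀ k < K, aip A (g k) (g k) = 2 * (1 + q) * (q ^ (2 * k) * N) := by
    intro k hk
    simp only [g, map_add, map_smul, LinearMap.add_apply, LinearMap.smul_apply, smul_eq_mul,
      hkk k hk, hk1k k hk, hkk1 k hk, hk1 k hk]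
    field_simp
    ring
  have hBE : ∀ k < K, (B k)⁻¹ *ᵥ (A *ᵥ E k) = E k - E (k + 1) := by
    intro k hk
    have h1 : B k *ᵥ (E k - E (k + 1)) = A *ᵥ E k := by
      have h2 : aip A (g k) (E k - E (k+1)) = (1 - q ^ 2) * (q ^ (2 * k) * N) := by
        simp only [g, map_add, map_sub, map_smul, LinearMap.add_apply, LinearMap.smul_apply,
          smul_eq_mul, hkk k hk, hk1k k hk, hkk1 k hk, hk1 k hk]
        ring
      have h3 : β k * ((1 - q ^ 2) * (q ^ (2 * k) * N)) = q / (1 + q) := by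
        have := (hD k).ne'
        have := hq2.ne'
        simp only [β]
        field_simp
      rw [hBv, h2, h3, ← mulVec_smul, ← mulVec_smul, ← mulVec_add]
      congr 1
      ext i
      simp only [g, Pi.add_apply, Pi.smul_apply, Pi.sub_apply, smul_eq_mul]
      field_simp
      ring
    have hdet : IsUnit (B k).det := (hBpd k).det_pos.ne'.isUnit
    rw [← h1, mulVec_mulVec, nonsing_inv_mul _ hdet, one_mulVec]
  refine ⟨B, hBpd, ?_, ?_⟩
  · intro k hk
    refine ⟨1 - q, 1 + q, by linarith, by linarith, hqκ.le, ?_, ?_⟩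
    · intro u
      rw [hBq, aip_def]
      have h1 := aip_cs hA (g k) u
      rw [hg k hk] at h1
      have h2 := mul_le_mul_of_nonneg_left h1 (hβ k).le
      have h3 : β k * (2 * (1 + q) * (q ^ (2 * k) * N) * aip A u u) =
          2 * q / (1 - q ^ 2) * aip A u u := by
        have := (hD k).ne'
        have := hq2.ne'
        simp only [β]
        field_simp
      rw [h3] at h2
      have h4 : (1 - q) * ((1 + q)⁻¹ * aip A u u + 2 * q / (1 - q ^ 2) * aip A u u)
          = aip A u u := by
        have h5 : (1 - q ^ 2) = (1 - q) * (1 + q) := by ring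
        have : 1 - q ≠ 0 := by linarith
        rw [h5]
        field_simp
        ring
      have h6 : 0 ≤ 1 - q := by linarith
      nlinarith [mul_le_mul_of_nonneg_left h2 h6]
    · intro u
      rw [hBq, aip_def, mul_add, ← mul_assoc, mul_inv_cancel₀ (by linarith)]
      have := hβ k
      have : 0 ≤ (1 + q) * (β k * aip A (g k) u ^ 2) := by positivity
      linarith
  · intro m _ _ _ x r s p e hx hr hs hp hxs he
    have hAA : ∀ v, A *ᵥ (A⁻¹ *ᵥ v) = v := fun v => by
      rw [mulVec_mulVec, mul_nonsing_inv _ hA.det_pos.ne'.isUnit, one_mulVec]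
    have hre : ∀ k, r k = A *ᵥ e k := fun k => by
      rw [hr, he, mulVec_sub, hAA]
    have hes : ∀ k, e (k+1) = e k - ((r k ⬝ᵥ p k) / ((A *ᵥ p k) ⬝ᵥ p k)) • p k := fun k => by
      rw [he, he, hxs]; abel
    have step : ∀ k < K, e k = E k → (∀ l < k, p l = E l - E (l + 1)) →
        s k = E k - E (k+1) ∧ p k = s k ∧ e (k+1) = E (k+1) := by
      intro k hk hek hpl
      have hsk : s k = E k - E (k+1) := by rw [hs, hre, hek, hBE k hk]
      have hpk : p k = s k := by
        rw [hp, Finset.sum_eq_zero, sub_zero]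
        intro l hl
        have hl : l < k := (Finset.mem_Ico.1 hl).2
        have : (A *ᵥ s k) ⬝ᵥ p l = 0 := by
          rw [aip_def, hsk, hpl l hl]
          simp only [map_sub, LinearMap.sub_apply]
          rw [hE k hk.le l hl.le, hE k hk.le (l+1) hl, hE (k+1) hk l (by omega),
            hE (k+1) hk (l+1) (by omega)]
          ring
        rw [this]; simp
      refine ⟨hsk, hpk, ?_⟩
      have h1 : r k ⬝ᵥ p k = (1 - q ^ 2) * (q ^ (2 * k) * N) := by
        rw [hre, aip_def, hpk, hsk, hek, map_sub, hkk k hk, hkk1 k hk]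
        ring
      have h2 : (A *ᵥ p k) ⬝ᵥ p k = (1 - q ^ 2) * (q ^ (2 * k) * N) := by
        rw [aip_def, hpk, hsk]
        simp only [map_sub, LinearMap.sub_apply, hkk k hk, hk1k k hk, hkk1 k hk, hk1 k hk]
        ring
      rw [hes, h1, h2, div_self (mul_pos hq2 (hD k)).ne', one_smul, hpk, hsk, hek]
      abel
    have main : ∀ k ≤ K, e k = E k ∧ ∀ l < k, p l = E l - E (l + 1) := by
      intro k
      induction k with
      | zero =>
        intro _
        refine ⟨by rw [he, hx, hE0, he0], fun l hl => by omega⟩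
      | succ k ih =>
        intro hk
        obtain ⟨h1, h2⟩ := ih (by omega)
        obtain ⟨h3, h4, h5⟩ := step k hk h1 h2
        refine ⟨h5, fun l hl => ?_⟩
        rcases Nat.lt_succ_iff_lt_or_eq.1 hl with h | rfl
        · exact h2 l h
        · rw [h4, h3]
    intro k hk
    obtain ⟨h1, h2⟩ := main k hk.le
    obtain ⟨h3, h4, h5⟩ := step k hk h1 h2
    refine ⟨h4, ?_⟩
    rw [h5, h1, anorm, anorm, aip_def, aip_def, hk1 k hk, hkk k hk,
      Real.sqrt_mul (sq_nonneg q), Real.sqrt_sq hq0.le,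
      mul_div_cancel_right₀ _ (Real.sqrt_pos.2 (hD k)).ne']
end

section
/- The convergence rate bound is sharp in the complex Hermitian case: let A be an n×n complex Hermitian positive definite matrix, b ∈ ℂⁿ, x₀ ∈ ℂⁿ with x₀ ≠ x* = A⁻¹b, let κmax > 1, and let K be a number of iterations with K < n. Then there exist complex Hermitian positive definite matrices B₀, …, B_{K−1}, each satisfying κ(B_k⁻¹A) ≤ κmax (i.e., there exist 0 < a_k ≤ b_k with b_k/a_k ≤ κmax and a_k⟨B_k u, u⟩ ≤ ⟨A u, u⟩ ≤ b_k⟨B_k u, u⟩ for all u ∈ ℂⁿ), such that for every admissible choice of the integers m_k (0 ≤ m_k ≤ k, m_{k+1} ≤ m_k + 1) the method produces p_k = s_k for every k < K (i.e., it turns into the preconditioned steepest descent method) and ‖e_{k+1}‖_A / ‖e_k‖_A = (κmax − 1)/(κmax + 1) for every k < K. -/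
open Matrix
open scoped ComplexOrder

/-- The `A`-norm `‖x‖_A = √(re ⟨A x, x⟩)` for a Hermitian positive definite `A`,
with `⟨x,y⟩ = Σ conj(xᵢ) yᵢ` the standard Hermitian inner product on `ℂⁿ`. -/
noncomputable def anormC {n : ℕ} (A : Matrix (Fin n) (Fin n) ℂ) (x : Fin n → ℂ) : ℝ :=
  Real.sqrt ((star (A *ᵥ x) ⬝ᵥ x).re)


noncomputable def GA {n : ℕ} (A : Matrix (Fin n) (Fin n) ℂ) (x y : Fin n → ℂ) : ℂ :=
  star (A *ᵥ x) ⬝ᵥ y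

section helpers
variable {n : ℕ} (A : Matrix (Fin n) (Fin n) ℂ)

lemma GA_add_left (x y z : Fin n → ℂ) : GA A (x + y) z = GA A x z + GA A y z := by
  simp [GA, mulVec_add, add_dotProduct]
lemma GA_add_right (x y z : Fin n → ℂ) : GA A x (y + z) = GA A x y + GA A x z := by
  simp [GA, dotProduct_add]
lemma GA_sub_left (x y z : Fin n → ℂ) : GA A (x - y) z = GA A x z - GA A y z := by
  simp [GA, mulVec_sub, sub_dotProduct]
lemma GA_sub_right (x y z : Fin n → ℂ) : GA A x (y - z) = GA A x y - GA A x z := by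
  simp [GA, dotProduct_sub]
lemma GA_smul_left (r : ℝ) (x y : Fin n → ℂ) : GA A ((r : ℂ) • x) y = r * GA A x y := by
  simp [GA, mulVec_smul]
lemma GA_smul_right (r : ℝ) (x y : Fin n → ℂ) : GA A x ((r : ℂ) • y) = r * GA A x y := by
  simp [GA]

open scoped MatrixOrder Matrix.Norms.L2Operator in
lemma GA_repr (hA : A.PosDef) : ∃ C : Matrix (Fin n) (Fin n) ℂ, IsUnit C ∧
    ∀ x y, GA A x y = inner ℂ (WithLp.toLp 2 (C *ᵥ x)) (WithLp.toLp 2 (C *ᵥ y)) := by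
  obtain ⟨C, hC⟩ := CStarAlgebra.nonneg_iff_eq_star_mul_self.mp hA.posSemidef.nonneg
  have hC' : A = Cᴴ * C := hC
  refine ⟨C, ?_, ?_⟩
  · have h := hA.isUnit
    rw [Matrix.isUnit_iff_isUnit_det] at h ⊢
    rw [hC', det_mul] at h
    exact isUnit_of_mul_isUnit_right h
  · intro x y
    rw [EuclideanSpace.inner_toLp_toLp, dotProduct_comm, GA, hC', ← mulVec_mulVec, star_mulVec,
      conjTranspose_conjTranspose, dotProduct_mulVec]

lemma GA_symm (hA : A.PosDef) (x y : Fin n → ℂ) : GA A y x = star (GA A x y) := by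
  obtain ⟨C, _, h⟩ := GA_repr A hA
  rw [h, h]; exact (inner_conj_symm _ _).symm

lemma GA_cs (hA : A.PosDef) (x y : Fin n → ℂ) :
    Complex.normSq (GA A x y) ≤ (GA A x x).re * (GA A y y).re := by
  obtain ⟨C, _, h⟩ := GA_repr A hA
  rw [h, h, h, Complex.normSq_eq_norm_sq]
  have h1 := norm_inner_le_norm (𝕜 := ℂ) (WithLp.toLp 2 (C *ᵥ x)) (WithLp.toLp 2 (C *ᵥ y))
  have h2 := inner_self_eq_norm_sq (𝕜 := ℂ) (WithLp.toLp 2 (C *ᵥ x))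
  have h3 := inner_self_eq_norm_sq (𝕜 := ℂ) (WithLp.toLp 2 (C *ᵥ y))
  simp only [RCLike.re_to_complex] at h2 h3
  rw [h2, h3, ← mul_pow]
  gcongr

lemma GA_self_pos (hA : A.PosDef) (x : Fin n → ℂ) (hx : x ≠ 0) :
    ∃ E : ℝ, 0 < E ∧ GA A x x = E := by
  obtain ⟨C, hC, h⟩ := GA_repr A hA
  refine ⟨‖WithLp.toLp 2 (C *ᵥ x)‖ ^ 2, ?_, ?_⟩
  · have : C *ᵥ x ≠ 0 := by
      intro h0
      exact hx ((Matrix.mulVec_injective_iff_isUnit.mpr hC) (by simpa using h0))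
    have : WithLp.toLp 2 (C *ᵥ x) ≠ 0 := by simpa using this
    positivity
  · rw [h, inner_self_eq_norm_sq_to_K]; simp

lemma GA_family (hA : A.PosDef) (e0 : Fin n → ℂ) (he : e0 ≠ 0) :
    ∃ u : ℕ → Fin n → ℂ, u 0 = e0 ∧ ∀ i < n, ∀ j < n,
      GA A (u i) (u j) = if i = j then GA A e0 e0 else 0 := by
  obtain ⟨C, hC, h⟩ := GA_repr A hA
  have hn : 0 < n := by
    rcases Nat.eq_zero_or_pos n with h0 | h0
    · subst h0; exact absurd (Subsingleton.elim _ _) he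
    · exact h0
  set v : EuclideanSpace ℂ (Fin n) := WithLp.toLp 2 (C *ᵥ e0) with hv
  have hCdet : IsUnit C.det := (Matrix.isUnit_iff_isUnit_det _).mp hC
  have hv0 : v ≠ 0 := by
    have : C *ᵥ e0 ≠ 0 := by
      intro h0
      exact he ((Matrix.mulVec_injective_iff_isUnit.mpr hC) (by simpa using h0))
    simpa [hv] using this
  have hnv : (‖v‖ : ℂ) ≠ 0 := by simpa using hv0
  obtain ⟨bb, hbb⟩ := Orthonormal.exists_orthonormalBasis_extension_of_card_eq (𝕜 := ℂ)
    (E := EuclideanSpace ℂ (Fin n)) (ι := Fin n) (by simp)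
    (v := fun _ => ((‖v‖ : ℂ)⁻¹) • v) (s := {⟨0, hn⟩}) (by
      constructor
      · intro i
        simp [norm_smul, hv0]
      · intro i j hij
        exact absurd (Subsingleton.elim i j) hij)
  have hb0 := hbb ⟨0, hn⟩ rfl
  refine ⟨fun i => if hi : i < n then C⁻¹ *ᵥ (WithLp.ofLp ((‖v‖ : ℂ) • bb ⟨i, hi⟩)) else 0, ?_, ?_⟩
  · simp only [hn, dif_pos, hb0, smul_smul, mul_inv_cancel₀ hnv, one_smul]
    simp [hv, nonsing_inv_mul _ hCdet]
  · intro i hi j hj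
    have hee : GA A e0 e0 = (‖v‖ : ℂ) ^ 2 := by
      rw [h, inner_self_eq_norm_sq_to_K]; simp [hv]
    rw [h, hee]
    simp only [hi, hj, dif_pos, mulVec_mulVec, mul_nonsing_inv _ hCdet, one_mulVec,
      WithLp.toLp_ofLp, inner_smul_left, inner_smul_right, orthonormal_iff_ite.mp bb.orthonormal]
    by_cases hij : i = j
    · simp [hij, sq]
    · simp [hij]

noncomputable def BB (γ : ℝ) (w : Fin n → ℂ) : Matrix (Fin n) (Fin n) ℂ :=
  A + (γ : ℂ) • vecMulVec (A *ᵥ w) (star (A *ᵥ w))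

lemma BB_mulVec (γ : ℝ) (w u : Fin n → ℂ) :
    BB A γ w *ᵥ u = A *ᵥ (u + ((γ : ℂ) * GA A w u) • w) := by
  rw [BB, add_mulVec, smul_mulVec, vecMulVec_mulVec, mulVec_add, mulVec_smul, mul_smul, GA]
  simp

lemma BB_posDef (hA : A.PosDef) (γ : ℝ) (hγ : 0 ≤ γ) (w : Fin n → ℂ) : (BB A γ w).PosDef := by
  apply hA.add_posSemidef
  exact (posSemidef_vecMulVec_self_star _).smul (by exact_mod_cast hγ)

lemma BB_form (hA : A.PosDef) (γ : ℝ) (w u : Fin n → ℂ) :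
    (star (BB A γ w *ᵥ u) ⬝ᵥ u).re = (GA A u u).re + γ * Complex.normSq (GA A w u) := by
  rw [BB_mulVec, mulVec_add, mulVec_smul, star_add, add_dotProduct, star_smul, smul_dotProduct]
  change (GA A u u + _ • GA A w u).re = _
  rw [Complex.add_re, smul_eq_mul, star_mul, ← mul_comm (star (γ : ℂ)), mul_assoc]
  simp [Complex.normSq_apply]

lemma BB_bounds (hA : A.PosDef) (κ : ℝ) (hκ : 1 < κ) (γ : ℝ) (w : Fin n → ℂ) (W : ℝ) (hW : 0 < W)
    (hw : GA A w w = W) (hγ : γ = (κ - 1) / W) :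
    ∃ a c : ℝ, 0 < a ∧ a ≤ c ∧ c / a ≤ κ ∧
        (∀ u : Fin n → ℂ, a * (star (BB A γ w *ᵥ u) ⬝ᵥ u).re ≤ (star (A *ᵥ u) ⬝ᵥ u).re) ∧
        (∀ u : Fin n → ℂ, (star (A *ᵥ u) ⬝ᵥ u).re ≤ c * (star (BB A γ w *ᵥ u) ⬝ᵥ u).re) := by
  have hk : 0 < κ := by linarith
  refine ⟨1 / κ, 1, by positivity, ?_, by simp, ?_, ?_⟩
  · rw [div_le_one hk]; exact hκ.le
  · intro u
    rw [BB_form A hA]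
    change _ ≤ (GA A u u).re
    have := GA_cs A hA w u
    rw [hw, Complex.ofReal_re] at this
    have h2 : γ * Complex.normSq (GA A w u) ≤ (κ - 1) * (GA A u u).re := by
      rw [hγ, div_mul_eq_mul_div, div_le_iff₀ hW]
      nlinarith
    rw [one_div_mul_eq_div, div_le_iff₀ hk]
    linarith
  · intro u
    rw [BB_form A hA]
    change (GA A u u).re ≤ _
    have : 0 ≤ γ * Complex.normSq (GA A w u) :=
      mul_nonneg (by rw [hγ]; exact div_nonneg (by linarith) hW.le) (Complex.normSq_nonneg _)
    linarith

/-- error sequence -/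
noncomputable def eeq (κ : ℝ) (e0 : Fin n → ℂ) (q : ℕ → Fin n → ℂ) : ℕ → Fin n → ℂ
  | 0 => e0
  | k + 1 => ((((κ - 1) / (κ + 1)) ^ 2 : ℝ) : ℂ) • eeq κ e0 q k -
      ((2 * κ * (κ - 1) / (κ + 1) ^ 2 : ℝ) : ℂ) • q k

noncomputable def sseq (κ : ℝ) (e0 : Fin n → ℂ) (q : ℕ → Fin n → ℂ) (k : ℕ) : Fin n → ℂ :=
  ((2 / (κ + 1) : ℝ) : ℂ) • eeq κ e0 q k + (((κ - 1) / (κ + 1) : ℝ) : ℂ) • q k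

lemma eeq_succ_eq (κ : ℝ) (hκ : 1 < κ) (e0 : Fin n → ℂ) (q : ℕ → Fin n → ℂ) (k : ℕ) :
    eeq κ e0 q (k + 1) = eeq κ e0 q k - ((2 * κ / (κ + 1) : ℝ) : ℂ) • sseq κ e0 q k := by
  have h : (κ + 1 : ℂ) ≠ 0 := by
    have : κ + 1 ≠ 0 := by linarith
    exact_mod_cast this
  ext i
  simp only [eeq, sseq, Pi.sub_apply, Pi.add_apply, Pi.smul_apply, smul_eq_mul]
  push_cast
  field_simp
  ring

/-- hypotheses: q orthogonal to e0 and to one another, scaled -/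
structure QH (κ : ℝ) (e0 : Fin n → ℂ) (q : ℕ → Fin n → ℂ) (E : ℝ) (K : ℕ) : Prop where
  ee : GA A e0 e0 = E
  eq : ∀ k < K, GA A e0 (q k) = 0
  qe : ∀ k < K, GA A (q k) e0 = 0
  qq : ∀ k < K, ∀ l < K, k ≠ l → GA A (q k) (q l) = 0
  qn : ∀ k < K, GA A (q k) (q k) = ((((κ - 1) / (κ + 1)) ^ (2 * k) * E / κ : ℝ) : ℂ)

variable {A}
lemma QH.eqk {κ : ℝ} {e0 : Fin n → ℂ} {q : ℕ → Fin n → ℂ} {E : ℝ} {K : ℕ} (H : QH A κ e0 q E K)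
    (l : ℕ) : ∀ k < K, l ≤ k → GA A (eeq κ e0 q l) (q k) = 0 ∧ GA A (q k) (eeq κ e0 q l) = 0 := by
  induction l with
  | zero => intro k hk _; exact ⟨H.eq k hk, H.qe k hk⟩
  | succ l ih =>
    intro k hk hl
    obtain ⟨h1, h2⟩ := ih k hk (by omega)
    rw [eeq, GA_sub_left, GA_sub_right, GA_smul_left, GA_smul_left, GA_smul_right, GA_smul_right,
      h1, h2, H.qq k hk l (by omega) (by omega), H.qq l (by omega) k hk (by omega)]
    simp

lemma QH.ek {κ : ℝ} (hκ : 1 < κ) {e0 : Fin n → ℂ} {q : ℕ → Fin n → ℂ} {E : ℝ} {K : ℕ}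
    (H : QH A κ e0 q E K) (k : ℕ) (hk : k ≤ K) : GA A (eeq κ e0 q k) (eeq κ e0 q k) =
      ((((κ - 1) / (κ + 1)) ^ (2 * k) * E : ℝ) : ℂ) := by
  have h : (κ + 1 : ℂ) ≠ 0 := by
    have : κ + 1 ≠ 0 := by linarith
    exact_mod_cast this
  have h' : (κ : ℂ) ≠ 0 := by
    have : κ ≠ 0 := by linarith
    exact_mod_cast this
  induction k with
  | zero => simp [eeq, H.ee]
  | succ k ih =>
    obtain ⟨h1, h2⟩ := H.eqk k k (by omega) le_rfl
    rw [eeq]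
    simp only [GA_sub_left, GA_sub_right, GA_smul_left, GA_smul_right, h1, h2, ih (by omega),
      H.qn k (by omega)]
    rw [show 2 * (k + 1) = 2 * k + 2 by ring, pow_add]
    push_cast
    generalize ((κ - 1 : ℂ) / (κ + 1)) ^ (2 * k) = t
    field_simp
    ring

lemma QH.es {κ : ℝ} (hκ : 1 < κ) {e0 : Fin n → ℂ} {q : ℕ → Fin n → ℂ} {E : ℝ} {K : ℕ}
    (H : QH A κ e0 q E K) (k : ℕ) (hk : k < K) : GA A (eeq κ e0 q k) (sseq κ e0 q k) =
      ((((κ - 1) / (κ + 1)) ^ (2 * k) * E * (2 / (κ + 1)) : ℝ) : ℂ) := by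
  obtain ⟨h1, h2⟩ := H.eqk k k hk le_rfl
  simp only [sseq, GA_add_right, GA_smul_right, h1, H.ek hκ k hk.le]
  push_cast; ring

lemma QH.ss {κ : ℝ} (hκ : 1 < κ) {e0 : Fin n → ℂ} {q : ℕ → Fin n → ℂ} {E : ℝ} {K : ℕ}
    (H : QH A κ e0 q E K) (k : ℕ) (hk : k < K) : GA A (sseq κ e0 q k) (sseq κ e0 q k) =
      ((((κ - 1) / (κ + 1)) ^ (2 * k) * E / κ : ℝ) : ℂ) := by
  have h : (κ + 1 : ℂ) ≠ 0 := by
    have : κ + 1 ≠ 0 := by linarith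
    exact_mod_cast this
  have h' : (κ : ℂ) ≠ 0 := by
    have : κ ≠ 0 := by linarith
    exact_mod_cast this
  obtain ⟨h1, h2⟩ := H.eqk k k hk le_rfl
  simp only [sseq, GA_add_right, GA_add_left, GA_smul_left, GA_smul_right, h1, h2,
    H.ek hκ k hk.le, H.qn k hk]
  push_cast
  generalize ((κ - 1 : ℂ) / (κ + 1)) ^ (2 * k) = t
  field_simp
  ring

lemma QH.e_s {κ : ℝ} (hκ : 1 < κ) {e0 : Fin n → ℂ} {q : ℕ → Fin n → ℂ} {E : ℝ} {K : ℕ}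
    (H : QH A κ e0 q E K) (l k : ℕ) (hk : k ≤ K) (hl : l < k) :
    GA A (eeq κ e0 q k) (sseq κ e0 q l) = 0 := by
  have h : (κ + 1 : ℂ) ≠ 0 := by
    have : κ + 1 ≠ 0 := by linarith
    exact_mod_cast this
  have h' : (κ : ℂ) ≠ 0 := by
    have : κ ≠ 0 := by linarith
    exact_mod_cast this
  induction k, hl using Nat.le_induction with
  | base =>
    rw [eeq_succ_eq κ hκ, GA_sub_left, GA_smul_left, H.es hκ l (by omega), H.ss hκ l (by omega)]
    push_cast
    generalize ((κ - 1 : ℂ) / (κ + 1)) ^ (2 * l) = t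
    field_simp
    ring
  | succ k hl ih =>
    have hlk : l < k := hl
    rw [eeq, GA_sub_left, GA_smul_left, GA_smul_left, ih (by omega), sseq, GA_add_right,
      GA_smul_right, GA_smul_right, (H.eqk l k (by omega) (by omega)).2,
      H.qq k (by omega) l (by omega) (by omega)]
    simp

lemma QH.s_s {κ : ℝ} (hκ : 1 < κ) {e0 : Fin n → ℂ} {q : ℕ → Fin n → ℂ} {E : ℝ} {K : ℕ}
    (H : QH A κ e0 q E K) (l k : ℕ) (hk : k < K) (hl : l < k) :
    GA A (sseq κ e0 q k) (sseq κ e0 q l) = 0 := by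
  have h1 := H.e_s hκ l k hk.le hl
  have h2 : GA A (q k) (sseq κ e0 q l) = 0 := by
    rw [sseq, GA_add_right,
      GA_smul_right, GA_smul_right, (H.eqk l k (by omega) (by omega)).2,
      H.qq k (by omega) l (by omega) (by omega)]
    simp
  rw [sseq, GA_add_left, GA_smul_left, GA_smul_left, h1, h2]
  simp

lemma QH.w {κ : ℝ} (hκ : 1 < κ) {e0 : Fin n → ℂ} {q : ℕ → Fin n → ℂ} {E : ℝ} {K : ℕ}
    (H : QH A κ e0 q E K) (k : ℕ) (hk : k < K) :
    GA A (eeq κ e0 q k - q k) (eeq κ e0 q k - q k) =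
      ((((κ - 1) / (κ + 1)) ^ (2 * k) * E * ((κ + 1) / κ) : ℝ) : ℂ) ∧
    GA A (eeq κ e0 q k - q k) (sseq κ e0 q k) =
      ((((κ - 1) / (κ + 1)) ^ (2 * k) * E / κ : ℝ) : ℂ) := by
  have h : (κ + 1 : ℂ) ≠ 0 := by
    have : κ + 1 ≠ 0 := by linarith
    exact_mod_cast this
  have h' : (κ : ℂ) ≠ 0 := by
    have : κ ≠ 0 := by linarith
    exact_mod_cast this
  obtain ⟨h1, h2⟩ := H.eqk k k hk le_rfl
  simp only [sseq, GA_sub_left, GA_sub_right, GA_add_right, GA_add_left, GA_smul_left,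
    GA_smul_right, h1, h2, H.ek hκ k hk.le, H.qn k hk]
  push_cast
  generalize ((κ - 1 : ℂ) / (κ + 1)) ^ (2 * k) = t
  constructor <;> (field_simp; ring)

noncomputable def gam (κ E : ℝ) (k : ℕ) : ℝ :=
  (κ - 1) / (((κ - 1) / (κ + 1)) ^ (2 * k) * E * ((κ + 1) / κ))

lemma QH.Bs {κ : ℝ} (hκ : 1 < κ) {e0 : Fin n → ℂ} {q : ℕ → Fin n → ℂ} {E : ℝ} {K : ℕ}
    (hE : 0 < E) (H : QH A κ e0 q E K) (k : ℕ) (hk : k < K) :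
    BB A (gam κ E k) (eeq κ e0 q k - q k) *ᵥ sseq κ e0 q k = A *ᵥ eeq κ e0 q k := by
  rw [BB_mulVec, (H.w hκ k hk).2]
  have ht : 0 < ((κ - 1) / (κ + 1)) ^ (2 * k) := by
    have : 0 < κ - 1 := by linarith
    positivity
  have h1 : gam κ E k * (((κ - 1) / (κ + 1)) ^ (2 * k) * E / κ) = (κ - 1) / (κ + 1) := by
    unfold gam
    generalize ((κ - 1) / (κ + 1)) ^ (2 * k) = t at *
    have : κ + 1 ≠ 0 := by linarith
    have : κ ≠ 0 := by linarith
    field_simp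
  rw [← Complex.ofReal_mul, h1]
  congr 1
  have h : (κ + 1 : ℂ) ≠ 0 := by
    have : κ + 1 ≠ 0 := by linarith
    exact_mod_cast this
  ext i
  simp only [sseq, Pi.sub_apply, Pi.add_apply, Pi.smul_apply, smul_eq_mul]
  push_cast
  field_simp
  ring

end helpers

/-- The convergence rate bound is sharp in the complex Hermitian case:
for any Hermitian positive definite `A`, `b`, `x 0 ≠ x* = A⁻¹ b`, `κmax > 1`, and number of
iterations `K < n`, there exist Hermitian positive definite preconditioners
`B 0, …, B (K−1)`, each with `κ(B_k⁻¹ A) ≤ κmax`, such that for every admissible choice of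
`m` the method turns into the preconditioned steepest descent method (`p k = s k`) and
`‖e (k+1)‖_A / ‖e k‖_A = (κmax − 1)/(κmax + 1)` for every `k < K`. -/
theorem pcg_bound_sharp_complex
    {n : ℕ} (A : Matrix (Fin n) (Fin n) ℂ) (hA : A.PosDef)
    (b x0 : Fin n → ℂ) (hx0 : x0 ≠ A⁻¹ *ᵥ b)
    (κmax : ℝ) (hκ : 1 < κmax) (K : ℕ) (hK : K < n) :
    ∃ B : ℕ → Matrix (Fin n) (Fin n) ℂ,
      (∀ k, (B k).PosDef) ∧
      (∀ k < K, ∃ a c : ℝ, 0 < a ∧ a ≤ c ∧ c / a ≤ κmax ∧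
        (∀ u : Fin n → ℂ, a * (star (B k *ᵥ u) ⬝ᵥ u).re ≤ (star (A *ᵥ u) ⬝ᵥ u).re) ∧
        (∀ u : Fin n → ℂ, (star (A *ᵥ u) ⬝ᵥ u).re ≤ c * (star (B k *ᵥ u) ⬝ᵥ u).re)) ∧
      ∀ m : ℕ → ℕ, m 0 = 0 → (∀ k, m k ≤ k) → (∀ k, m (k + 1) ≤ m k + 1) →
      ∀ x r s p e : ℕ → Fin n → ℂ,
        x 0 = x0 →
        (∀ k, r k = b - A *ᵥ x k) →
        (∀ k, s k = (B k)⁻¹ *ᵥ r k) →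
        (∀ k, p k = s k - ∑ l ∈ Finset.Ico (k - m k) k,
            ((star (A *ᵥ s k) ⬝ᵥ p l) / (star (A *ᵥ p l) ⬝ᵥ p l)) • p l) →
        (∀ k, x (k + 1) = x k + ((star (r k) ⬝ᵥ p k) / (star (A *ᵥ p k) ⬝ᵥ p k)) • p k) →
        (∀ k, e k = A⁻¹ *ᵥ b - x k) →
        ∀ k < K, p k = s k ∧
          anormC A (e (k + 1)) / anormC A (e k) = (κmax - 1) / (κmax + 1) := by
  have hdet : IsUnit A.det := (Matrix.isUnit_iff_isUnit_det _).mp hA.isUnit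
  set e0 : Fin n → ℂ := A⁻¹ *ᵥ b - x0 with he0
  have he0' : e0 ≠ 0 := fun h => hx0 (sub_eq_zero.mp h).symm
  obtain ⟨E, hE, hEE⟩ := GA_self_pos A hA e0 he0'
  obtain ⟨u, hu0, hu⟩ := GA_family A hA e0 he0'
  set ρ : ℝ := (κmax - 1) / (κmax + 1) with hρ
  have hκ0 : 0 < κmax := by linarith
  have hκ1 : 0 < κmax - 1 := by linarith
  have hρ0 : 0 < ρ := by positivity
  set q : ℕ → Fin n → ℂ := fun k => ((ρ ^ k / Real.sqrt κmax : ℝ) : ℂ) • u (k + 1) with hq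
  have H : QH A κmax e0 q E K := by
    constructor
    · exact hEE
    · intro k hk
      rw [hq, GA_smul_right]
      nth_rewrite 1 [← hu0]
      rw [hu 0 (by omega) (k + 1) (by omega)]; simp
    · intro k hk
      rw [hq, GA_smul_left]
      nth_rewrite 1 [← hu0]
      rw [hu (k + 1) (by omega) 0 (by omega)]; simp
    · intro k hk l hl hkl
      simp only [hq, GA_smul_right, GA_smul_left]
      rw [hu (k + 1) (by omega) (l + 1) (by omega), if_neg (by omega)]; simp
    · intro k hk
      simp only [hq, GA_smul_right, GA_smul_left]
      rw [hu (k + 1) (by omega) (k + 1) (by omega), if_pos rfl, hEE, ← Complex.ofReal_mul,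
        ← Complex.ofReal_mul]
      congr 1
      rw [← hρ, ← mul_assoc, div_mul_div_comm, Real.mul_self_sqrt hκ0.le]
      ring
  have hW : ∀ k : ℕ, 0 < ((κmax - 1) / (κmax + 1)) ^ (2 * k) * E * ((κmax + 1) / κmax) := by
    intro k; positivity
  have hBpd : ∀ k, (BB A (gam κmax E k) (eeq κmax e0 q k - q k)).PosDef := fun k =>
    BB_posDef A hA _ (div_nonneg hκ1.le (hW k).le) _
  refine ⟨fun k => BB A (gam κmax E k) (eeq κmax e0 q k - q k), hBpd, ?_, ?_⟩
  · intro k hk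
    exact BB_bounds A hA κmax hκ _ _ _ (hW k) (H.w hκ k hk).1 rfl
  intro m _ _ _ x r s p e hx hr hs hp hxs he
  have key : ∀ k ≤ K, e k = eeq κmax e0 q k ∧
      ∀ l < k, s l = sseq κmax e0 q l ∧ p l = sseq κmax e0 q l := by
    intro k
    induction k with
    | zero =>
      intro _
      refine ⟨?_, fun l hl => absurd hl (Nat.not_lt_zero l)⟩
      rw [he, hx]; rfl
    | succ k ih =>
      intro hk
      obtain ⟨h1, h2⟩ := ih (by omega)
      have hrk : r k = A *ᵥ eeq κmax e0 q k := by
        rw [hr, ← h1, he, mulVec_sub, mulVec_mulVec, mul_nonsing_inv _ hdet, one_mulVec]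
      have hsk : s k = sseq κmax e0 q k := by
        rw [hs, hrk, ← H.Bs hκ hE k (by omega), mulVec_mulVec,
          nonsing_inv_mul _ ((Matrix.isUnit_iff_isUnit_det _).mp (hBpd k).isUnit), one_mulVec]
      have hpk : p k = sseq κmax e0 q k := by
        rw [hp, hsk, Finset.sum_eq_zero, sub_zero]
        intro l hl
        have hlk : l < k := (Finset.mem_Ico.mp hl).2
        rw [(h2 l hlk).2]
        have := H.s_s hκ l k (by omega) hlk
        rw [GA] at this
        rw [this]; simp
      refine ⟨?_, ?_⟩
      · rw [he, hxs, hpk, hrk]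
        have h3 := H.es hκ k (by omega)
        have h4 := H.ss hκ k (by omega)
        rw [GA] at h3 h4
        rw [h3, h4, ← Complex.ofReal_div, eeq_succ_eq κmax hκ, ← h1, he, ← sub_sub]
        congr 3
        have : 0 < ρ ^ (2 * k) := by positivity
        rw [← hρ]
        field_simp
      · intro l hl
        rcases Nat.lt_succ_iff_lt_or_eq.mp hl with h | h
        · exact h2 l h
        · subst h; exact ⟨hsk, hpk⟩
  intro k hk
  obtain ⟨h1, h2⟩ := key (k + 1) hk
  refine ⟨by rw [(h2 k (by omega)).1, (h2 k (by omega)).2], ?_⟩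
  have h3 := (key k hk.le).1
  have n1 : ∀ j ≤ K, anormC A (eeq κmax e0 q j) = ρ ^ j * Real.sqrt E := by
    intro j hj
    have := H.ek hκ j hj
    rw [GA] at this
    rw [anormC, this, Complex.ofReal_re, ← hρ, mul_comm 2 j, pow_mul,
      Real.sqrt_mul (by positivity), Real.sqrt_sq (by positivity)]
  rw [h1, h3, n1 _ hk, n1 _ hk.le, pow_succ]
  have : 0 < Real.sqrt E := Real.sqrt_pos.mpr hE
  have : 0 < ρ ^ k := by positivity
  field_simp
end

section
/- Let A and B be n×n real symmetric positive definite matrices, and let a and b be the smallest and largest values of the Rayleigh quotient ⟨A u, u⟩/⟨B u, u⟩ over nonzero u ∈ ℝⁿ (i.e., the extreme eigenvalues of B⁻¹A), normalized so that a + b = 2. Then for any κmax ≥ 1, the condition b/a ≤ κmax holds if and only if ‖I − B⁻¹A‖_B ≤ (κmax − 1)/(κmax + 1), where ‖·‖_B denotes the operator norm induced by the B-inner product ⟨x,y⟩_B = ⟨B x, y⟩. -/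
open Matrix

/-- The `B`-norm `‖x‖_B = √⟨B x, x⟩` for an SPD matrix `B`. -/
noncomputable def bnorm {n : ℕ} (B : Matrix (Fin n) (Fin n) ℝ) (x : Fin n → ℝ) : ℝ :=
  Real.sqrt ((B *ᵥ x) ⬝ᵥ x)

/-- The operator norm of a matrix `M` induced by the `B`-inner product:
`‖M‖_B = sup_{x ≠ 0} ‖M x‖_B / ‖x‖_B`. -/
noncomputable def bOpNorm {n : ℕ} (B M : Matrix (Fin n) (Fin n) ℝ) : ℝ :=
  sSup {t : ℝ | ∃ x : Fin n → ℝ, x ≠ 0 ∧ t = bnorm B (M *ᵥ x) / bnorm B x}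

theorem aux_symm_s17 {n : ℕ} {B : Matrix (Fin n) (Fin n) ℝ} (hB : B.PosDef) (x y : Fin n → ℝ) :
    (B *ᵥ x) ⬝ᵥ y = (B *ᵥ y) ⬝ᵥ x := by
  have h : Bᵀ = B := by
    have := hB.isHermitian.eq
    rwa [conjTranspose_eq_transpose_of_trivial] at this
  rw [dotProduct_comm, dotProduct_mulVec, ← mulVec_transpose, h]

theorem aux_pos_s17 {n : ℕ} {B : Matrix (Fin n) (Fin n) ℝ} (hB : B.PosDef) (x : Fin n → ℝ)
    (hx : x ≠ 0) : 0 < (B *ᵥ x) ⬝ᵥ x := by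
  have := hB.dotProduct_mulVec_pos hx
  rw [dotProduct_comm]
  simpa using this

theorem aux_exp {n : ℕ} {B : Matrix (Fin n) (Fin n) ℝ} (hB : B.PosDef) (s t : ℝ)
    (x y : Fin n → ℝ) :
    (B *ᵥ (s • x + t • y)) ⬝ᵥ (s • x + t • y) =
      s ^ 2 * ((B *ᵥ x) ⬝ᵥ x) + 2 * s * t * ((B *ᵥ x) ⬝ᵥ y) + t ^ 2 * ((B *ᵥ y) ⬝ᵥ y) := by
  simp only [mulVec_add, mulVec_smul, add_dotProduct, dotProduct_add, smul_dotProduct,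
    dotProduct_smul, smul_eq_mul]
  rw [aux_symm_s17 hB y x]
  ring

/-- Let `A`, `B` be SPD, and let `a` and `c` be the smallest and largest
values of the Rayleigh quotient `⟨A u, u⟩/⟨B u, u⟩` over nonzero `u` (the extreme
eigenvalues of `B⁻¹A`), normalized so that `a + c = 2`. Then for any `κmax ≥ 1`,
`c/a ≤ κmax ↔ ‖I − B⁻¹A‖_B ≤ (κmax − 1)/(κmax + 1)`. -/
theorem cond_iff_bOpNorm {n : ℕ} (A B : Matrix (Fin n) (Fin n) ℝ)
    (hA : A.PosDef) (hB : B.PosDef) (a c : ℝ)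
    (ha : IsLeast {t : ℝ | ∃ u : Fin n → ℝ, u ≠ 0 ∧
      t = ((A *ᵥ u) ⬝ᵥ u) / ((B *ᵥ u) ⬝ᵥ u)} a)
    (hc : IsGreatest {t : ℝ | ∃ u : Fin n → ℝ, u ≠ 0 ∧
      t = ((A *ᵥ u) ⬝ᵥ u) / ((B *ᵥ u) ⬝ᵥ u)} c)
    (hnorm : a + c = 2) (κmax : ℝ) (hκ : 1 ≤ κmax) :
    c / a ≤ κmax ↔ bOpNorm B (1 - B⁻¹ * A) ≤ (κmax - 1) / (κmax + 1) := by
  have nn : ∀ u : Fin n → ℝ, 0 ≤ (B *ᵥ u) ⬝ᵥ u := by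
    intro u
    by_cases hu : u = 0
    · simp [hu]
    · exact (aux_pos_s17 hB u hu).le
  have lo : ∀ u : Fin n → ℝ, a * ((B *ᵥ u) ⬝ᵥ u) ≤ (A *ᵥ u) ⬝ᵥ u := by
    intro u
    by_cases hu : u = 0
    · simp [hu]
    · exact (le_div_iff₀ (aux_pos_s17 hB u hu)).1 (ha.2 ⟨u, hu, rfl⟩)
  have hi : ∀ u : Fin n → ℝ, (A *ᵥ u) ⬝ᵥ u ≤ c * ((B *ᵥ u) ⬝ᵥ u) := by
    intro u
    by_cases hu : u = 0
    · simp [hu]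
    · exact (div_le_iff₀ (aux_pos_s17 hB u hu)).1 (hc.2 ⟨u, hu, rfl⟩)
  have hapos : 0 < a := by
    obtain ⟨u, hu, h⟩ := ha.1
    rw [h]
    exact div_pos (aux_pos_s17 hA u hu) (aux_pos_s17 hB u hu)
  have hac : a ≤ c := ha.2 hc.1
  obtain ⟨ρ, hρ⟩ : ∃ ρ, ρ = c - 1 := ⟨_, rfl⟩
  have hc' : c = 1 + ρ := by linarith
  have ha' : a = 1 - ρ := by linarith
  have hρ0 : 0 ≤ ρ := by linarith
  have hdet : IsUnit B.det := hB.det_pos.ne'.isUnit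
  have hBM : ∀ x : Fin n → ℝ, B *ᵥ ((1 - B⁻¹ * A) *ᵥ x) = B *ᵥ x - A *ᵥ x := by
    intro x
    rw [mulVec_mulVec, mul_sub, mul_one, ← mul_assoc, mul_nonsing_inv _ hdet, one_mul, sub_mulVec]
  have key : bOpNorm B (1 - B⁻¹ * A) = ρ := by
    have hub : ∀ x : Fin n → ℝ, x ≠ 0 →
        bnorm B ((1 - B⁻¹ * A) *ᵥ x) / bnorm B x ≤ ρ := by
      intro x hx
      have h1 := hBM x
      generalize (1 - B⁻¹ * A) *ᵥ x = y at h1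
      have hX := aux_pos_s17 hB x hx
      have hN : (B *ᵥ y) ⬝ᵥ y = (B *ᵥ x) ⬝ᵥ y - (A *ᵥ x) ⬝ᵥ y := by
        rw [h1, sub_dotProduct]
      have hY := nn y
      have main : ∀ s : ℝ, 2 * s * ((B *ᵥ y) ⬝ᵥ y) ≤
          ρ * (s ^ 2 * ((B *ᵥ x) ⬝ᵥ x) + (B *ᵥ y) ⬝ᵥ y) := by
        intro s
        have e1 := lo (s • x + (1 : ℝ) • y)
        have e2 := hi (s • x + (-1 : ℝ) • y)
        rw [aux_exp hA, aux_exp hB] at e1 e2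
        have e3 : s * ((B *ᵥ y) ⬝ᵥ y) = s * ((B *ᵥ x) ⬝ᵥ y) - s * ((A *ᵥ x) ⬝ᵥ y) := by
          rw [hN]; ring
        rw [ha'] at e1
        rw [hc'] at e2
        linarith
      have fin : (B *ᵥ y) ⬝ᵥ y ≤ ρ ^ 2 * ((B *ᵥ x) ⬝ᵥ x) := by
        rcases hρ0.eq_or_lt with h0 | h0
        · have := main 1
          rw [← h0] at this ⊢
          linarith
        · have := main ρ
          have h2 : ρ * ((B *ᵥ y) ⬝ᵥ y) ≤ ρ * (ρ ^ 2 * ((B *ᵥ x) ⬝ᵥ x)) := by linarith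
          exact le_of_mul_le_mul_left h2 h0
      unfold bnorm
      rw [div_le_iff₀ (Real.sqrt_pos.2 hX)]
      apply Real.sqrt_le_iff.2
      refine ⟨by positivity, ?_⟩
      rw [mul_pow, Real.sq_sqrt hX.le]
      exact fin
    apply le_antisymm
    · obtain ⟨u, hu, _⟩ := hc.1
      refine csSup_le ⟨_, u, hu, rfl⟩ ?_
      rintro t ⟨x, hx, rfl⟩
      exact hub x hx
    · obtain ⟨u, hu, hcu⟩ := hc.1
      have hle : bnorm B ((1 - B⁻¹ * A) *ᵥ u) / bnorm B u ≤ bOpNorm B (1 - B⁻¹ * A) := by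
        refine le_csSup ⟨ρ, ?_⟩ ⟨u, hu, rfl⟩
        rintro t ⟨x, hx, rfl⟩
        exact hub x hx
      refine le_trans ?_ hle
      have h1 := hBM u
      generalize (1 - B⁻¹ * A) *ᵥ u = y at h1
      have hX := aux_pos_s17 hB u hu
      rw [eq_div_iff hX.ne'] at hcu
      have e := nn (ρ • u + (1 : ℝ) • y)
      rw [aux_exp hB, aux_symm_s17 hB u y, h1, sub_dotProduct, ← hcu, hc', ← h1] at e
      unfold bnorm
      rw [le_div_iff₀ (Real.sqrt_pos.2 hX)]
      apply Real.le_sqrt_of_sq_le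
      rw [mul_pow, Real.sq_sqrt hX.le]
      linarith
  rw [key, div_le_iff₀ hapos, le_div_iff₀ (by linarith), hc', ha']
  constructor <;> intro h <;> linarith
end
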